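/- Let n ≥ 1, α > 0 and 1 < q ≤ 1 + α/n. Suppose the coefficients a_{ij} satisfy condition (8) with this α and some c > 0. Let u be an entire weak solution of u_t ≥ Lu + |u|^{q−1}u in S and let v be an entire weak solution of v_t ≤ Lv + |v|^{q−1}v in S such that u ≥ v everywhere in S. Then u = v in S. -/

import Mathlib

open MeasureTheory Real

noncomputable section

/-- Euclidean space ℝⁿ. -/
abbrev Xn (n : ℕ) : Type := EuclideanSpace ℝ (Fin n)

/-- Points of the half-space `S = (0,∞) × ℝⁿ`. -/
abbrev Pt (n : ℕ) : Type := ℝ × Xn n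

/-- The half-space `S = (0,∞) × ℝⁿ`. -/
def halfSpace (n : ℕ) : Set (Pt n) := {p | 0 < p.1}

/-- Partial derivative in the time variable. -/
noncomputable def pdT {n : ℕ} (w : Pt n → ℝ) (p : Pt n) : ℝ :=
  fderiv ℝ w p (1, 0)

/-- Partial derivative in the space variable `x_j`. -/
noncomputable def pdX {n : ℕ} (w : Pt n → ℝ) (j : Fin n) (p : Pt n) : ℝ :=
  fderiv ℝ w p (0, EuclideanSpace.single j 1)

/-- The odd power function `x ↦ |x|^{q-1} x`. -/
noncomputable def oddPow (q x : ℝ) : ℝ := |x| ^ (q - 1) * x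

/-- Condition (8): `𝒜(R) ≤ c R^{2-α}` for all `R > 1`, expressed as an a.e. bound
on the majorant `A` over the region `{(t,x) : t > 0, R/2 < |x| < R}`. -/
def Cond8 {n : ℕ} (A : Pt n → ℝ) (α c : ℝ) : Prop :=
  ∀ R : ℝ, 1 < R →
    ∀ᵐ p ∂(volume.restrict
        {p : Pt n | 0 < p.1 ∧ R / 2 < ‖p.2‖ ∧ ‖p.2‖ < R}),
      A p ≤ c * R ^ (2 - α)

/-- `u` is an entire weak solution of `u_t ≥ Lu + |u|^{q−1}u` in `S`. -/
def WeakSuperSol {n : ℕ} (a : Fin n → Fin n → Pt n → ℝ) (q : ℝ)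
    (u : Pt n → ℝ) : Prop :=
  ∀ φ : Pt n → ℝ, ContDiff ℝ (⊤ : ℕ∞) φ → HasCompactSupport φ →
    tsupport φ ⊆ halfSpace n → (∀ p, 0 ≤ φ p) →
    0 ≤ ∫ p in halfSpace n,
        (pdT u p * φ p + ∑ i, ∑ j, a i j p * pdX φ i p * pdX u j p
          - oddPow q (u p) * φ p)

/-- `v` is an entire weak solution of `v_t ≤ Lv + |v|^{q−1}v` in `S`. -/
def WeakSubSol {n : ℕ} (a : Fin n → Fin n → Pt n → ℝ) (q : ℝ)
    (v : Pt n → ℝ) : Prop :=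
  ∀ φ : Pt n → ℝ, ContDiff ℝ (⊤ : ℕ∞) φ → HasCompactSupport φ →
    tsupport φ ⊆ halfSpace n → (∀ p, 0 ≤ φ p) →
    ∫ p in halfSpace n,
        (pdT v p * φ p + ∑ i, ∑ j, a i j p * pdX φ i p * pdX v j p
          - oddPow q (v p) * φ p) ≤ 0

/-! ### Scalar lemmas -/

lemma young_first (θ : ℝ) (h0 : 0 < θ) (h1 : θ < 1) (κ : ℝ) (hκ : 0 < κ) :
    ∃ M : ℝ, 0 ≤ M ∧ ∀ x b : ℝ, 0 ≤ x → 0 ≤ b →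
      x ^ θ * b ≤ κ * x + M * b ^ (1 / (1 - θ)) := by
  have h2 : 0 < 1 - θ := by linarith
  refine ⟨(κ ^ (-θ)) ^ (1 / (1 - θ)), by positivity, ?_⟩
  intro x b hx hb
  have h := Real.geom_mean_le_arith_mean2_weighted h0.le h2.le
    (mul_nonneg hκ.le hx) (p₂ := (κ ^ (-θ) * b) ^ (1 / (1 - θ))) (by positivity) (by ring)
  rw [← Real.rpow_mul (by positivity), one_div, inv_mul_cancel₀ h2.ne', Real.rpow_one,
    Real.mul_rpow hκ.le hx, Real.mul_rpow (by positivity) hb] at h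
  have e : κ ^ θ * x ^ θ * (κ ^ (-θ) * b) = x ^ θ * b := by
    rw [show κ ^ θ * x ^ θ * (κ ^ (-θ) * b) = (κ ^ θ * κ ^ (-θ)) * (x ^ θ * b) by ring,
      ← Real.rpow_add hκ]
    simp
  rw [e] at h
  rw [one_div]
  have a1 : 0 ≤ κ * x := by positivity
  have a2 : 0 ≤ (κ ^ (-θ)) ^ ((1 - θ)⁻¹) * b ^ ((1 - θ)⁻¹) := by positivity
  nlinarith

lemma young_second (θ : ℝ) (h0 : 0 < θ) (h1 : θ < 1) (κ : ℝ) (hκ : 0 < κ) :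
    ∃ M : ℝ, 0 ≤ M ∧ ∀ x b : ℝ, 0 ≤ x → 0 ≤ b →
      x ^ θ * b ≤ M * x + κ * b ^ (1 / (1 - θ)) := by
  have h2 : 0 < 1 - θ := by linarith
  obtain ⟨M, hM, h⟩ := young_first (1 - θ) h2 (by linarith) κ hκ
  refine ⟨M, hM, fun x b hx hb => ?_⟩
  have := h (b ^ (1 / (1 - θ))) (x ^ θ) (by positivity) (by positivity)
  rw [← Real.rpow_mul hb, one_div, inv_mul_cancel₀ h2.ne', Real.rpow_one,
    show 1 - (1 - θ) = θ by ring, ← Real.rpow_mul hx, mul_one_div_cancel h0.ne',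
    Real.rpow_one] at this
  rw [one_div]
  linarith

lemma add_rpow_le_two {q x y : ℝ} (hq : 1 ≤ q) (hx : 0 ≤ x) (hy : 0 ≤ y) :
    (2 : ℝ) ^ (1 - q) * (x + y) ^ q ≤ x ^ q + y ^ q := by
  have h := NNReal.rpow_add_le_mul_rpow_add_rpow ⟨x, hx⟩ ⟨y, hy⟩ hq
  have h : (x + y) ^ q ≤ (2 : ℝ) ^ (q - 1) * (x ^ q + y ^ q) := by exact_mod_cast h
  have h2 : (2 : ℝ) ^ (1 - q) * (2 : ℝ) ^ (q - 1) = 1 := by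
    rw [← Real.rpow_add two_pos]; simp
  calc (2 : ℝ) ^ (1 - q) * (x + y) ^ q
      ≤ (2 : ℝ) ^ (1 - q) * ((2 : ℝ) ^ (q - 1) * (x ^ q + y ^ q)) := by gcongr
    _ = ((2 : ℝ) ^ (1 - q) * (2 : ℝ) ^ (q - 1)) * (x ^ q + y ^ q) := by ring
    _ = _ := by rw [h2, one_mul]

lemma two_rpow_le_one {q : ℝ} (hq : 1 < q) : (2 : ℝ) ^ (1 - q) ≤ 1 :=
  Real.rpow_le_one_of_one_le_of_nonpos (by norm_num) (by linarith)

lemma superadd {q x y : ℝ} (hq : 1 ≤ q) (hx : 0 ≤ x) (hy : 0 ≤ y) :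
    x ^ q + y ^ q ≤ (x + y) ^ q := Real.add_rpow_le_rpow_add hx hy hq

lemma oddPow_of_nonneg {q x : ℝ} (hq : 1 < q) (hx : 0 ≤ x) : oddPow q x = x ^ q := by
  unfold oddPow
  rw [abs_of_nonneg hx]
  rcases hx.eq_or_lt with h | h
  · rw [← h]; simp [Real.zero_rpow (by linarith : q ≠ 0)]
  · rw [← Real.rpow_add_one h.ne']; congr 1; ring

lemma oddPow_neg (q x : ℝ) : oddPow q (-x) = - oddPow q x := by
  unfold oddPow; simp

lemma oddPow_sub {q x y : ℝ} (hq : 1 < q) (h : y ≤ x) :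
    (2 : ℝ) ^ (1 - q) * (x - y) ^ q ≤ oddPow q x - oddPow q y := by
  have h2 := two_rpow_le_one hq
  have hp : 0 ≤ (x - y) ^ q := Real.rpow_nonneg (by linarith) _
  rcases le_total 0 y with hy | hy
  · have hx : 0 ≤ x := by linarith
    rw [oddPow_of_nonneg hq hx, oddPow_of_nonneg hq hy]
    have := superadd hq.le (sub_nonneg.2 h) hy
    rw [sub_add_cancel] at this
    nlinarith
  · rcases le_total 0 x with hx | hx
    · have e : oddPow q y = - (-y) ^ q := by
        rw [← oddPow_of_nonneg hq (by linarith : 0 ≤ -y), oddPow_neg, neg_neg]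
      rw [oddPow_of_nonneg hq hx, e]
      have := add_rpow_le_two hq.le hx (by linarith : 0 ≤ -y)
      rw [← sub_eq_add_neg] at this
      linarith
    · have e : ∀ z : ℝ, z ≤ 0 → oddPow q z = - (-z) ^ q := fun z hz => by
        rw [← oddPow_of_nonneg hq (by linarith : 0 ≤ -z), oddPow_neg, neg_neg]
      rw [e x hx, e y hy]
      have := superadd hq.le (sub_nonneg.2 h) (by linarith : 0 ≤ -x)
      rw [show x - y + -x = -y by ring] at this
      nlinarith

lemma continuous_oddPow {q : ℝ} (hq : 1 < q) : Continuous (oddPow q) := by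
  unfold oddPow
  exact (continuous_abs.rpow_const fun _ => Or.inr (by linarith)).mul continuous_id

/-- the bilinear form -/
def Qf {n : ℕ} (a : Fin n → Fin n → Pt n → ℝ) (p : Pt n) (ξ η : Fin n → ℝ) : ℝ :=
  ∑ i, ∑ j, a i j p * ξ i * η j

lemma Qf_lin {n : ℕ} (a : Fin n → Fin n → Pt n → ℝ) (p : Pt n) (ξ η ζ : Fin n → ℝ) (x y : ℝ) :
    Qf a p (fun i => x * ξ i + y * η i) ζ = x * Qf a p ξ ζ + y * Qf a p η ζ := by
  unfold Qf
  simp only [Finset.mul_sum, ← Finset.sum_add_distrib]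
  refine Finset.sum_congr rfl fun i _ => Finset.sum_congr rfl fun j _ => ?_
  ring

lemma Qf_cs {n : ℕ} (a : Fin n → Fin n → Pt n → ℝ) (p : Pt n)
    (hs : ∀ i j, a i j p = a j i p)
    (h0 : ∀ ξ : Xn n, 0 ≤ ∑ i, ∑ j, a i j p * ξ i * ξ j) (ξ η : Fin n → ℝ) (x y : ℝ) :
    2 * (x * y) * Qf a p ξ η ≤ x ^ 2 * Qf a p ξ ξ + y ^ 2 * Qf a p η η := by
  have e : Qf a p η ξ = Qf a p ξ η := by
    unfold Qf
    rw [Finset.sum_comm]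
    refine Finset.sum_congr rfl fun i _ => Finset.sum_congr rfl fun j _ => ?_
    rw [hs j i]; ring
  have h := h0 (WithLp.toLp 2 (fun i => x * ξ i - y * η i))
  have k : ∑ i, ∑ j, a i j p * (WithLp.toLp 2 (fun i => x * ξ i - y * η i) : Xn n) i *
      (WithLp.toLp 2 (fun i => x * ξ i - y * η i) : Xn n) j =
      x ^ 2 * Qf a p ξ ξ + y ^ 2 * Qf a p η η - x * y * Qf a p ξ η - x * y * Qf a p η ξ := by
    unfold Qf
    simp only [Finset.mul_sum, ← Finset.sum_add_distrib, ← Finset.sum_sub_distrib]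
    refine Finset.sum_congr rfl fun i _ => Finset.sum_congr rfl fun j _ => ?_
    ring
  rw [k, e] at h
  linarith

/-- `ψ^m ≤ (ψ^(m+2))^θ`, and the resulting Young inequality -/
lemma weight_le {m : ℕ} {θ ψ f e k : ℝ} (hm : (m + 2 : ℝ) * θ ≤ m) (_h0 : 0 ≤ θ) (hψ0 : 0 ≤ ψ)
    (hψ1 : ψ ≤ 1) (hf : 0 ≤ f) (he : e * θ = k) (hm0 : 0 < m) :
    f ^ k * ψ ^ m ≤ (f ^ e * ψ ^ (m + 2)) ^ θ := by
  rw [Real.mul_rpow (by positivity) (by positivity), ← Real.rpow_mul hf, he]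
  gcongr
  rw [← Real.rpow_natCast ψ (m + 2), ← Real.rpow_mul hψ0, ← Real.rpow_natCast]
  push_cast
  rcases hψ0.eq_or_lt with h | h
  · rw [← h, Real.zero_rpow (by positivity)]; positivity
  · exact Real.rpow_le_rpow_of_exponent_ge h hψ1 hm

lemma exists_m (θ₁ θ₂ θ₃ : ℝ) (h1 : θ₁ < 1) (h2 : θ₂ < 1) (h3 : θ₃ < 1) :
    ∃ m : ℕ, 0 < m ∧ (m + 2 : ℝ) * θ₁ ≤ m ∧ (m + 2 : ℝ) * θ₂ ≤ m ∧ (m + 2 : ℝ) * θ₃ ≤ m := by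
  have key : ∀ θ : ℝ, θ < 1 → ∀ᶠ m : ℕ in Filter.atTop, (m + 2 : ℝ) * θ ≤ m := by
    intro θ h
    have := (tendsto_natCast_atTop_atTop (R := ℝ)).eventually_ge_atTop (2 * θ / (1 - θ))
    filter_upwards [this] with m hm
    rw [div_le_iff₀ (by linarith)] at hm
    linarith
  exact ((Filter.eventually_gt_atTop 0).and
    ((key _ h1).and ((key _ h2).and (key _ h3)))).exists

/-! ### Pointwise inequalities -/

lemma pointwise1 (q ν C1 : ℝ) (m : ℕ) (hq : 1 < q) (hν0 : 0 < ν) (hν1 : ν < 1) (hC1 : 0 < C1)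
    (hm0 : 0 < m) (hm : (m + 2 : ℝ) * ((1 - ν) / (q - ν)) ≤ m) :
    ∃ K : ℝ, 0 ≤ K ∧ ∀ ε ρ r w ψ wt ψt Qww Qpw Qpp G : ℝ, 0 < ε → 0 ≤ r → 0 ≤ w →
      0 ≤ ψ → ψ ≤ 1 → ρ = r ^ (1 / (1 - (1 - ν) / (q - ν))) → ε ^ (q - ν) ≤ ρ →
      (∀ x y : ℝ, 2 * (x * y) * Qpw ≤ x ^ 2 * Qpp + y ^ 2 * Qww) →
      Qpp ≤ C1 * r → - ψt ≤ C1 * r → (2 : ℝ) ^ (1 - q) * w ^ q ≤ G →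
      wt * ((w + ε) ^ (-ν) * ψ ^ (m + 2)) + (-ν * (w + ε) ^ (-ν - 1) * ψ ^ (m + 2) * Qww
        + (m + 2) * (w + ε) ^ (-ν) * ψ ^ (m + 1) * Qpw) - G * ((w + ε) ^ (-ν) * ψ ^ (m + 2)) ≤
      wt * (w + ε) ^ (-ν) * ψ ^ (m + 2)
        + (m + 2) / (1 - ν) * (w + ε) ^ (1 - ν) * ψ ^ (m + 1) * ψt
        - ν / 2 * ((w + ε) ^ (-ν - 1) * ψ ^ (m + 2) * Qww) + K * ρ := by
  set θ := (1 - ν) / (q - ν) with hθ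
  have hqν : 0 < q - ν := by linarith
  have hν' : 0 < 1 - ν := by linarith
  have hθ0 : 0 < θ := by positivity
  have hθ1 : θ < 1 := by rw [hθ, div_lt_one hqν]; linarith
  set c0 : ℝ := (2 : ℝ) ^ (1 - q) with hc0
  have hc0p : 0 < c0 := by positivity
  set C3 : ℝ := C1 * ((m + 2 : ℝ) ^ 2 / (2 * ν) + (m + 2) / (1 - ν)) with hC3
  have hC3p : 0 < C3 := by positivity
  obtain ⟨M, hM, hY⟩ := young_first θ hθ0 hθ1 (c0 ^ 2 / C3) (by positivity)
  refine ⟨C3 * M + 1, by positivity, ?_⟩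
  intro ε ρ r w ψ wt ψt Qww Qpw Qpp G hε hr hw hψ0 hψ1 hρ hερ hcs hQpp hψt hG
  have hf : 0 < w + ε := by linarith
  have hfε : ε ≤ w + ε := by linarith
  have hcc : c0 * (w + ε) ^ q ≤ w ^ q + ε ^ q := add_rpow_le_two hq.le hw hε.le
  generalize hfdef : w + ε = f at *
  have e1 : f ^ (-ν) = f ^ (-ν - 1) * f := by
    rw [← Real.rpow_add_one hf.ne']; congr 1; ring
  have e2 : f ^ (1 - ν) = f ^ (-ν - 1) * f ^ 2 := by
    rw [← Real.rpow_natCast f 2, ← Real.rpow_add hf]; congr 1; push_cast; ring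
  -- Young
  have hT : f ^ (1 - ν) * ψ ^ m * r ≤ c0 ^ 2 / C3 * (f ^ (q - ν) * ψ ^ (m + 2)) + M * ρ := by
    have h1 := weight_le (k := 1 - ν) (e := q - ν) hm hθ0.le hψ0 hψ1 hf.le
      (by rw [hθ]; field_simp) hm0
    have h2 := hY (f ^ (q - ν) * ψ ^ (m + 2)) r (by positivity) hr
    rw [← hρ] at h2
    exact (mul_le_mul_of_nonneg_right h1 hr).trans h2
  have hT' : C3 * (f ^ (1 - ν) * ψ ^ m * r) ≤
      c0 ^ 2 * (f ^ (q - ν) * ψ ^ (m + 2)) + C3 * M * ρ := by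
    have := mul_le_mul_of_nonneg_left hT hC3p.le
    have e : C3 * (c0 ^ 2 / C3 * (f ^ (q - ν) * ψ ^ (m + 2)) + M * ρ) =
      c0 ^ 2 * (f ^ (q - ν) * ψ ^ (m + 2)) + C3 * M * ρ := by field_simp
    linarith
  -- Cauchy
  have hCS : (m + 2) * f ^ (-ν) * ψ ^ (m + 1) * Qpw ≤
      ν / 2 * (f ^ (-ν - 1) * ψ ^ (m + 2) * Qww) +
        (m + 2 : ℝ) ^ 2 / (2 * ν) * C1 * (f ^ (1 - ν) * ψ ^ m * r) := by
    have h := hcs ((m + 2) * f) (ν * ψ)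
    have hFp : 0 ≤ f ^ (-ν - 1) * ψ ^ m / (2 * ν) := by positivity
    have h2 : 2 * ((m + 2) * f * (ν * ψ)) * Qpw ≤
        ((m + 2) * f) ^ 2 * (C1 * r) + (ν * ψ) ^ 2 * Qww :=
      h.trans (by gcongr)
    have h3 := mul_le_mul_of_nonneg_left h2 hFp
    rw [e1, e2]
    have l : f ^ (-ν - 1) * ψ ^ m / (2 * ν) * (2 * ((m + 2) * f * (ν * ψ)) * Qpw) =
      (m + 2) * (f ^ (-ν - 1) * f) * ψ ^ (m + 1) * Qpw := by field_simp; ring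
    have l2 : f ^ (-ν - 1) * ψ ^ m / (2 * ν) *
        (((m + 2) * f) ^ 2 * (C1 * r) + (ν * ψ) ^ 2 * Qww) =
      ν / 2 * (f ^ (-ν - 1) * ψ ^ (m + 2) * Qww) +
        (m + 2 : ℝ) ^ 2 / (2 * ν) * C1 * (f ^ (-ν - 1) * f ^ 2 * ψ ^ m * r) := by
      field_simp
      ring
    linarith
  -- time term
  have hTi : - ((m + 2) / (1 - ν) * f ^ (1 - ν) * ψ ^ (m + 1) * ψt) ≤
      (m + 2) / (1 - ν) * C1 * (f ^ (1 - ν) * ψ ^ m * r) := by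
    have h1 : ψ ^ (m + 1) * (-ψt) ≤ ψ ^ m * (C1 * r) :=
      (mul_le_mul_of_nonneg_left hψt (by positivity)).trans
        (mul_le_mul_of_nonneg_right (pow_le_pow_of_le_one hψ0 hψ1 (by omega)) (by positivity))
    have h2 : 0 ≤ (m + 2) / (1 - ν) * f ^ (1 - ν) := by positivity
    have := mul_le_mul_of_nonneg_left h1 h2
    linarith
  -- G term
  have hGt : c0 ^ 2 * (f ^ (q - ν) * ψ ^ (m + 2)) - ρ ≤ G * (f ^ (-ν) * ψ ^ (m + 2)) := by
    have hc1 : c0 ≤ 1 := two_rpow_le_one hq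
    have g1 : c0 ^ 2 * f ^ q - c0 * ε ^ q ≤ G := by
      have := mul_le_mul_of_nonneg_left hcc hc0p.le
      linarith
    have e3 : f ^ (q - ν) = f ^ q * f ^ (-ν) := by rw [← Real.rpow_add hf]; congr 1
    have g2 : f ^ (-ν) ≤ ε ^ (-ν) :=
      Real.rpow_le_rpow_of_nonpos hε hfε (by linarith)
    have g3 : ε ^ q * f ^ (-ν) ≤ ρ := by
      calc ε ^ q * f ^ (-ν) ≤ ε ^ q * ε ^ (-ν) := by gcongr
        _ = ε ^ (q - ν) := by rw [← Real.rpow_add hε]; congr 1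
        _ ≤ ρ := hερ
    have g0 : 0 ≤ ε ^ q * f ^ (-ν) := by positivity
    have g4 : c0 ^ 2 * f ^ (q - ν) - ρ ≤ G * f ^ (-ν) := by
      have := mul_le_mul_of_nonneg_right g1 (by positivity : 0 ≤ f ^ (-ν))
      have k : c0 * (ε ^ q * f ^ (-ν)) ≤ ε ^ q * f ^ (-ν) := mul_le_of_le_one_left g0 hc1
      rw [e3]
      linarith
    have hρ0 : 0 ≤ ρ := g0.trans g3
    have hp1 : ψ ^ (m + 2) ≤ 1 := pow_le_one₀ hψ0 hψ1
    have hp0 : 0 ≤ ψ ^ (m + 2) := by positivity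
    have := mul_le_mul_of_nonneg_right g4 hp0
    have k : ρ * ψ ^ (m + 2) ≤ ρ := mul_le_of_le_one_right hρ0 hp1
    linarith
  have hsum : C3 * (f ^ (1 - ν) * ψ ^ m * r) =
    (m + 2 : ℝ) ^ 2 / (2 * ν) * C1 * (f ^ (1 - ν) * ψ ^ m * r) +
    (m + 2) / (1 - ν) * C1 * (f ^ (1 - ν) * ψ ^ m * r) := by rw [hC3]; ring
  linarith

lemma pointwise2 (q ν C1 : ℝ) (m : ℕ) (hq : 1 < q) (hν0 : 0 < ν) (hν2 : 1 + ν < q)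
    (hC1 : 0 < C1) (hm0 : 0 < m) (hm2 : (m + 2 : ℝ) * (1 / q) ≤ m)
    (hm3 : (m + 2 : ℝ) * ((1 + ν) / q) ≤ m) :
    ∃ K : ℝ, 0 ≤ K ∧ ∀ l1 l2 μ ρ r z ε w ψ wt ψt Qww Qpw Qpp G χ : ℝ, 0 ≤ l1 → 0 ≤ l2 → 0 < μ →
      (∀ x b : ℝ, 0 ≤ x → 0 ≤ b → x ^ (1 / q) * b ≤ l1 * x + l2 * b ^ (1 / (1 - 1 / q))) →
      (∀ x b : ℝ, 0 ≤ x → 0 ≤ b →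
        x ^ ((1 + ν) / q) * b ≤ l1 * x + l2 * b ^ (1 / (1 - (1 + ν) / q))) →
      0 < ε → 0 ≤ r → 0 < z → 0 ≤ w →
      0 ≤ ψ → ψ ≤ 1 → (χ = 0 ∨ χ = 1) →
      r ^ (1 / (1 - 1 / q)) = ρ → (z * r) ^ (1 / (1 - (1 + ν) / q)) = ρ →
      (∀ x y : ℝ, 2 * (x * y) * Qpw ≤ x ^ 2 * Qpp + y ^ 2 * Qww) →
      Qpp ≤ C1 * r * χ → - ψt ≤ C1 * r * χ → (2 : ℝ) ^ (1 - q) * w ^ q ≤ G →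
      wt * ψ ^ (m + 2) + (m + 2) * ψ ^ (m + 1) * Qpw - G * ψ ^ (m + 2) ≤
      wt * ψ ^ (m + 2) + w * ((m + 2) * ψ ^ (m + 1) * ψt) - (2 : ℝ) ^ (1 - q) * (w ^ q * ψ ^ (m + 2))
        + μ * z⁻¹ * ((w + ε) ^ (-ν - 1) * ψ ^ (m + 2) * Qww)
        + K * (1 + 1 / μ) * (l1 * (w ^ q * ψ ^ (m + 2) * χ + ε ^ q) + l2 * ρ) := by
  have hq0 : 0 < q := by linarith
  set c0 : ℝ := (2 : ℝ) ^ (1 - q) with hc0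
  have hc0p : 0 < c0 := by positivity
  have hc1 : c0 ≤ 1 := two_rpow_le_one hq
  refine ⟨(m + 2 : ℝ) ^ 2 * C1 / c0, by positivity, ?_⟩
  intro l1 l2 μ ρ r z ε w ψ wt ψt Qww Qpw Qpp G χ hl1 hl2 hμ hY2 hY3 hε hr hz hw hψ0 hψ1 hχ
    hρ2 hρ3 hcs hQpp hψt hG
  have hχ0 : 0 ≤ χ := by rcases hχ with h | h <;> rw [h] <;> norm_num
  have hχ1 : χ ≤ 1 := by rcases hχ with h | h <;> rw [h] <;> norm_num
  have hρ0 : 0 ≤ ρ := by rw [← hρ2]; positivity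
  have hf : 0 < w + ε := by linarith
  have hcc : c0 * (w + ε) ^ q ≤ w ^ q + ε ^ q := add_rpow_le_two hq.le hw hε.le
  generalize hfdef : w + ε = f at *
  have hp1 : ψ ^ (m + 2) ≤ 1 := pow_le_one₀ hψ0 hψ1
  have hεq : 0 ≤ ε ^ q := by positivity
  -- term 1
  have hT2 : w * ψ ^ m * r * χ ≤ l1 * (w ^ q * ψ ^ (m + 2) * χ) + l2 * ρ := by
    have h1 := weight_le (k := 1) (e := q) hm2 (by positivity) hψ0 hψ1 hw
      (by field_simp) hm0
    rw [Real.rpow_one] at h1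
    have h2 := hY2 (w ^ q * ψ ^ (m + 2)) r (by positivity) hr
    rw [hρ2] at h2
    have h3 := (mul_le_mul_of_nonneg_right h1 hr).trans h2
    have h4 := mul_le_mul_of_nonneg_right h3 hχ0
    have h5 : l2 * ρ * χ ≤ l2 * ρ := mul_le_of_le_one_right (by positivity) hχ1
    linarith
  have hT3 : f ^ (1 + ν) * ψ ^ m * (z * r) * χ ≤ l1 * (f ^ q * ψ ^ (m + 2) * χ) + l2 * ρ := by
    have h1 := weight_le (k := 1 + ν) (e := q) hm3 (by positivity) hψ0 hψ1 hf.le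
      (by field_simp) hm0
    have h2 := hY3 (f ^ q * ψ ^ (m + 2)) (z * r) (by positivity) (by positivity)
    rw [hρ3] at h2
    have h3 := (mul_le_mul_of_nonneg_right h1 (by positivity : 0 ≤ z * r)).trans h2
    have h4 := mul_le_mul_of_nonneg_right h3 hχ0
    have h5 : l2 * ρ * χ ≤ l2 * ρ := mul_le_of_le_one_right (by positivity) hχ1
    linarith
  have hfq : c0 * (f ^ q * ψ ^ (m + 2) * χ) ≤ w ^ q * ψ ^ (m + 2) * χ + ε ^ q := by
    have h1 := mul_le_mul_of_nonneg_right hcc (by positivity : 0 ≤ ψ ^ (m + 2) * χ)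
    have h2 : ψ ^ (m + 2) * χ ≤ 1 := mul_le_one₀ hp1 hχ0 hχ1
    have h3 : ε ^ q * (ψ ^ (m + 2) * χ) ≤ ε ^ q := mul_le_of_le_one_right hεq h2
    linarith
  set X := l1 * (w ^ q * ψ ^ (m + 2) * χ + ε ^ q) + l2 * ρ with hX
  have hX0 : 0 ≤ X := by positivity
  have hT2' : w * ψ ^ m * r * χ ≤ X := by
    have : 0 ≤ l1 * ε ^ q := by positivity
    rw [hX]; linarith
  have hT3' : c0 * (f ^ (1 + ν) * ψ ^ m * (z * r) * χ) ≤ X := by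
    have h1 := mul_le_mul_of_nonneg_left hT3 hc0p.le
    have h2 := mul_le_mul_of_nonneg_left hfq hl1
    have h3 : c0 * (l2 * ρ) ≤ l2 * ρ := mul_le_of_le_one_left (by positivity) hc1
    rw [hX]; linarith
  -- time term
  have hTi : - (w * ((m + 2) * ψ ^ (m + 1) * ψt)) ≤ (m + 2) * C1 * X := by
    have h1 : ψ ^ (m + 1) * (-ψt) ≤ ψ ^ m * (C1 * r * χ) :=
      (mul_le_mul_of_nonneg_left hψt (by positivity)).trans
        (mul_le_mul_of_nonneg_right (pow_le_pow_of_le_one hψ0 hψ1 (by omega)) (by positivity))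
    have h2 : 0 ≤ (m + 2) * w := by positivity
    have h3 := mul_le_mul_of_nonneg_left h1 h2
    have h4 := mul_le_mul_of_nonneg_left hT2' (by positivity : 0 ≤ (m + 2) * C1)
    linarith
  -- Cauchy
  have hCS : (m + 2) * ψ ^ (m + 1) * Qpw ≤
      μ * z⁻¹ * (f ^ (-ν - 1) * ψ ^ (m + 2) * Qww) +
        (m + 2 : ℝ) ^ 2 / (4 * μ) * C1 * (f ^ (1 + ν) * ψ ^ m * (z * r) * χ) := by
    have e1 : f ^ (-ν - 1) = (f ^ (1 + ν))⁻¹ := by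
      rw [← Real.rpow_neg hf.le]; congr 1; ring
    rw [e1]
    have hF : 0 < f ^ (1 + ν) := by positivity
    generalize f ^ (1 + ν) = F at *
    have h := hcs ((m + 2) * (z * F)) (2 * μ * ψ)
    have h2 : 2 * ((m + 2) * (z * F) * (2 * μ * ψ)) * Qpw ≤
        ((m + 2) * (z * F)) ^ 2 * (C1 * r * χ) + (2 * μ * ψ) ^ 2 * Qww :=
      h.trans (by gcongr)
    have h3 := mul_le_mul_of_nonneg_left h2 (by positivity : 0 ≤ ψ ^ m / (4 * μ * (z * F)))
    have l : ψ ^ m / (4 * μ * (z * F)) * (2 * ((m + 2) * (z * F) * (2 * μ * ψ)) * Qpw) =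
      (m + 2) * ψ ^ (m + 1) * Qpw := by field_simp; ring
    have l2 : ψ ^ m / (4 * μ * (z * F)) *
        (((m + 2) * (z * F)) ^ 2 * (C1 * r * χ) + (2 * μ * ψ) ^ 2 * Qww) =
      μ * z⁻¹ * (F⁻¹ * ψ ^ (m + 2) * Qww) +
        (m + 2 : ℝ) ^ 2 / (4 * μ) * C1 * (F * ψ ^ m * (z * r) * χ) := by
      field_simp
      ring
    linarith
  have hCS2 : (m + 2 : ℝ) ^ 2 / (4 * μ) * C1 * (f ^ (1 + ν) * ψ ^ m * (z * r) * χ) ≤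
      (m + 2 : ℝ) ^ 2 * C1 / c0 * (1 / μ) * X := by
    have h1 := mul_le_mul_of_nonneg_left hT3'
      (by positivity : 0 ≤ (m + 2 : ℝ) ^ 2 / (4 * μ) * C1 / c0)
    have e : (m + 2 : ℝ) ^ 2 / (4 * μ) * C1 / c0 * (c0 * (f ^ (1 + ν) * ψ ^ m * (z * r) * χ)) =
      (m + 2 : ℝ) ^ 2 / (4 * μ) * C1 * (f ^ (1 + ν) * ψ ^ m * (z * r) * χ) := by
      field_simp
    have e2 : (m + 2 : ℝ) ^ 2 / (4 * μ) * C1 / c0 * X =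
      (m + 2 : ℝ) ^ 2 * C1 / c0 * (1 / μ) * X / 4 := by field_simp
    have : 0 ≤ (m + 2 : ℝ) ^ 2 * C1 / c0 * (1 / μ) * X := by positivity
    linarith
  have hTi2 : (m + 2) * C1 * X ≤ (m + 2 : ℝ) ^ 2 * C1 / c0 * X := by
    gcongr
    rw [le_div_iff₀ hc0p]
    have : (m + 2 : ℝ) * c0 ≤ (m + 2) ^ 2 := by
      have h0 : (0 : ℝ) ≤ m := by positivity
      calc (m + 2 : ℝ) * c0 ≤ (m + 2 : ℝ) * (m + 2) :=
            mul_le_mul_of_nonneg_left (by linarith) (by linarith)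
        _ = _ := by ring
    have h5 := mul_le_mul_of_nonneg_right this hC1.le
    linarith
  have hGG := mul_le_mul_of_nonneg_right hG (by positivity : 0 ≤ ψ ^ (m + 2))
  have e : (m + 2 : ℝ) ^ 2 * C1 / c0 * (1 + 1 / μ) * X =
    (m + 2 : ℝ) ^ 2 * C1 / c0 * X + (m + 2 : ℝ) ^ 2 * C1 / c0 * (1 / μ) * X := by ring
  linarith

/-! ### Cutoff functions -/

lemma exists_g : ∃ g : ℝ → ℝ, ContDiff ℝ (⊤ : ℕ∞) g ∧ (∀ s, 0 ≤ g s) ∧ (∀ s, g s ≤ 1) ∧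
    (∀ s, s ≤ 1 → g s = 1) ∧ (∀ s, 2 ≤ s → g s = 0) ∧ (∀ s, deriv g s ≤ 0) ∧
    (∀ s, s ≤ 1 → deriv g s = 0) ∧ (∀ s, 2 ≤ s → deriv g s = 0) ∧
    ∃ C : ℝ, 0 < C ∧ ∀ s, |deriv g s| ≤ C := by
  have hsm : ContDiff ℝ (⊤ : ℕ∞) (fun s : ℝ => Real.smoothTransition (2 - s)) :=
    Real.smoothTransition.contDiff.comp (contDiff_const.sub contDiff_id)
  have h1 : ∀ s : ℝ, s ≤ 1 → Real.smoothTransition (2 - s) = 1 := fun s hs =>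
    Real.smoothTransition.one_of_one_le (by linarith)
  have h2 : ∀ s : ℝ, 2 ≤ s → Real.smoothTransition (2 - s) = 0 := fun s hs =>
    Real.smoothTransition.zero_of_nonpos (by linarith)
  have d1 : ∀ s : ℝ, s ≤ 1 → deriv (fun s : ℝ => Real.smoothTransition (2 - s)) s = 0 := by
    intro s hs
    apply IsLocalMax.deriv_eq_zero
    refine Filter.Eventually.of_forall fun x => ?_
    simp only [h1 s hs]
    exact Real.smoothTransition.le_one _
  have d2 : ∀ s : ℝ, 2 ≤ s → deriv (fun s : ℝ => Real.smoothTransition (2 - s)) s = 0 := by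
    intro s hs
    apply IsLocalMin.deriv_eq_zero
    refine Filter.Eventually.of_forall fun x => ?_
    simp only [h2 s hs]
    exact Real.smoothTransition.nonneg _
  refine ⟨fun s => Real.smoothTransition (2 - s), hsm, fun s => Real.smoothTransition.nonneg _,
    fun s => Real.smoothTransition.le_one _, h1, h2, ?_, d1, d2, ?_⟩
  · intro s
    apply Antitone.deriv_nonpos
    intro x y hxy
    exact Real.smoothTransition.monotone (by linarith)
  · have hc : Continuous (deriv (fun s : ℝ => Real.smoothTransition (2 - s))) :=
      hsm.continuous_deriv (by norm_cast)
    obtain ⟨C, hC⟩ := (isCompact_Icc (a := (1 : ℝ)) (b := 2)).exists_bound_of_continuousOn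
      hc.continuousOn
    refine ⟨|C| + 1, by positivity, fun s => ?_⟩
    rcases le_total s 1 with h | h
    · rw [d1 s h]; simp; positivity
    · rcases le_total 2 s with h' | h'
      · rw [d2 s h']; simp; positivity
      · have := hC s ⟨h, h'⟩
        rw [Real.norm_eq_abs] at this
        linarith [le_abs_self C]

/-- the far region -/
def ER (n : ℕ) (α R : ℝ) : Set (Pt n) := {p | R ^ α < p.1 ∨ R < ‖p.2‖}

lemma measurableSet_ER (n : ℕ) (α R : ℝ) : MeasurableSet (ER n α R) := by
  have h1 : IsOpen {p : Pt n | R ^ α < p.1} := isOpen_lt continuous_const continuous_fst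
  have h2 : IsOpen {p : Pt n | R < ‖p.2‖} := isOpen_lt continuous_const continuous_snd.norm
  exact (h1.union h2).measurableSet

lemma pdT_eq {n : ℕ} {ψ : Pt n → ℝ} {p : Pt n} (h : DifferentiableAt ℝ ψ p) {d : ℝ}
    (hd : HasDerivAt (fun s : ℝ => ψ (s, p.2)) d p.1) : pdT ψ p = d := by
  have h1 : HasDerivAt (fun s : ℝ => ((s, p.2) : Pt n)) ((1, 0) : Pt n) p.1 :=
    (hasDerivAt_id p.1).prodMk (hasDerivAt_const p.1 p.2)
  have h2 : HasFDerivAt ψ (fderiv ℝ ψ p) (p.1, p.2) := h.hasFDerivAt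
  have h3 := h2.comp_hasDerivAt p.1 h1
  exact h3.unique hd

lemma pdX_eq {n : ℕ} {ψ : Pt n → ℝ} {p : Pt n} (h : DifferentiableAt ℝ ψ p) (i : Fin n) {d : ℝ}
    (hd : HasDerivAt (fun s : ℝ => ψ (p.1, p.2 + s • EuclideanSpace.single i (1 : ℝ))) d 0) :
    pdX ψ i p = d := by
  have h1 : HasDerivAt (fun s : ℝ => ((p.1, p.2 + s • EuclideanSpace.single i (1 : ℝ)) : Pt n))
      ((0, EuclideanSpace.single i (1 : ℝ)) : Pt n) 0 := by
    refine (hasDerivAt_const (0 : ℝ) p.1).prodMk ?_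
    have := ((hasDerivAt_id (0 : ℝ)).smul_const
      (EuclideanSpace.single i (1 : ℝ) : Xn n)).const_add p.2
    simpa using this
  have h2 : HasFDerivAt ψ (fderiv ℝ ψ p)
    (p.1, p.2 + (0 : ℝ) • (EuclideanSpace.single i (1 : ℝ) : Xn n)) := by
    simpa using h.hasFDerivAt
  have h3 := h2.comp_hasDerivAt (0 : ℝ) h1
  exact h3.unique hd

lemma exists_cutoff (n : ℕ) (α c : ℝ) (hα : 0 < α) (hc : 0 < c)
    (a : Fin n → Fin n → Pt n → ℝ) (A : Pt n → ℝ)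
    (hA_nonneg : ∀ p, 0 ≤ A p)
    (hform : ∀ᵐ p ∂(volume.restrict (halfSpace n)), ∀ ξ : Xn n,
      0 ≤ ∑ i, ∑ j, a i j p * ξ i * ξ j ∧
      ∑ i, ∑ j, a i j p * ξ i * ξ j ≤ A p * ‖ξ‖ ^ 2)
    (hcond8 : Cond8 A α c) :
    ∃ C1 : ℝ, 0 < C1 ∧ ∃ C2 : ℝ, 0 < C2 ∧ ∀ R : ℝ, 1 < R → ∃ ψ : Pt n → ℝ,
      ContDiff ℝ (⊤ : ℕ∞) ψ ∧ HasCompactSupport ψ ∧ tsupport ψ ⊆ halfSpace n ∧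
      (∀ p, 0 ≤ ψ p) ∧ (∀ p, ψ p ≤ 1) ∧
      volume (tsupport ψ) ≤ ENNReal.ofReal (C2 * R ^ (n + α)) ∧
      (∀ p, - pdT ψ p ≤ C1 * R ^ (-α) * (ER n α R).indicator (fun _ => (1 : ℝ)) p) ∧
      (∀ᵐ p ∂(volume.restrict (halfSpace n)),
        Qf a p (fun i => pdX ψ i p) (fun i => pdX ψ i p) ≤
          C1 * R ^ (-α) * (ER n α R).indicator (fun _ => (1 : ℝ)) p) ∧
      (∀ p, 2 / R ≤ p.1 → p.1 ≤ R ^ α → ‖p.2‖ ≤ R → ψ p = 1) := by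
  obtain ⟨g, hgs, g0, g1, gl, gr, dneg, dl, dr, C, hC, dC⟩ := exists_g
  set C3 : ℝ := c * 2 ^ (2 - α) * (n * (4 * C) ^ 2) with hC3
  have hC30 : 0 ≤ C3 := by positivity
  set V : ℝ := (volume (Metric.ball (0 : Xn n) 1)).toReal with hV
  refine ⟨C + C3, by positivity, 2 * 2 ^ n * V + 1, by positivity, ?_⟩
  intro R hR
  have hR0 : 0 < R := by linarith
  set T : ℝ := R ^ α with hT
  have hTp : 0 < T := by positivity
  have hTi : R ^ (-α) = T⁻¹ := Real.rpow_neg hR0.le α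
  set ψ : Pt n → ℝ := fun p => (1 - g (R * p.1)) * g (p.1 * T⁻¹) * g (‖p.2‖ ^ 2 * (R ^ 2)⁻¹)
    with hψ
  have hψs : ContDiff ℝ (⊤ : ℕ∞) ψ := by
    refine ((contDiff_const.sub (hgs.comp (contDiff_const.mul contDiff_fst))).mul
      (hgs.comp (contDiff_fst.mul contDiff_const))).mul
      (hgs.comp ((contDiff_snd.norm_sq ℝ).mul contDiff_const))
  have hψd : ∀ p, DifferentiableAt ℝ ψ p := fun p =>
    (hψs.differentiable (by norm_num)) p
  have hgd : ∀ s, HasDerivAt g (deriv g s) s := fun s =>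
    ((hgs.differentiable (by norm_num)) s).hasDerivAt
  set K : Set (Pt n) := Set.Icc (1 / R) (2 * T) ×ˢ Metric.closedBall (0 : Xn n) (2 * R) with hK
  have hKc : IsCompact K := isCompact_Icc.prod (isCompact_closedBall _ _)
  have hxout : ∀ x : Xn n, 2 * R < ‖x‖ → 2 ≤ ‖x‖ ^ 2 * (R ^ 2)⁻¹ := by
    intro x hx
    rw [← div_eq_mul_inv, le_div_iff₀ (by positivity)]
    nlinarith
  have hxin : ∀ x : Xn n, ‖x‖ ≤ R → ‖x‖ ^ 2 * (R ^ 2)⁻¹ ≤ 1 := by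
    intro x hx
    rw [← div_eq_mul_inv, div_le_one (by positivity)]
    exact pow_le_pow_left₀ (norm_nonneg _) hx 2
  have hsupp : tsupport ψ ⊆ K := by
    apply closure_minimal _ hKc.isClosed
    intro p hp
    by_contra hpK
    apply hp
    have : ¬ (1 / R ≤ p.1) ∨ ¬ (p.1 ≤ 2 * T) ∨ ¬ (‖p.2‖ ≤ 2 * R) := by
      by_contra hcon
      push Not at hcon
      exact hpK ⟨⟨hcon.1, hcon.2.1⟩, by simpa using hcon.2.2⟩
    simp only [hψ]
    rcases this with h | h | h
    · rw [gl (R * p.1)]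
      · simp
      · push Not at h
        rw [lt_div_iff₀ hR0] at h
        linarith
    · rw [gr (p.1 * T⁻¹)]
      · simp
      · push Not at h
        rw [← div_eq_mul_inv, le_div_iff₀ hTp]
        linarith
    · rw [gr (‖p.2‖ ^ 2 * (R ^ 2)⁻¹) (hxout _ (not_le.1 h))]
      simp
  refine ⟨ψ, hψs, hKc.of_isClosed_subset (isClosed_tsupport ψ) hsupp, ?_, ?_, ?_, ?_, ?_, ?_, ?_⟩
  · intro p hp
    have := (hsupp hp).1.1
    exact lt_of_lt_of_le (by positivity) this
  · intro p
    exact mul_nonneg (mul_nonneg (by linarith [g1 (R * p.1)]) (g0 _)) (g0 _)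
  · intro p
    have h1 : 1 - g (R * p.1) ≤ 1 := by linarith [g0 (R * p.1)]
    exact mul_le_one₀ (mul_le_one₀ h1 (g0 _) (g1 _)) (g0 _) (g1 _)
  · calc volume (tsupport ψ) ≤ volume K := measure_mono hsupp
      _ = ENNReal.ofReal (2 * T - 1 / R) * (ENNReal.ofReal ((2 * R) ^ n) *
          volume (Metric.ball (0 : Xn n) 1)) := by
        rw [hK, Measure.volume_eq_prod, Measure.prod_prod, Real.volume_Icc,
          Measure.addHaar_closedBall _ _ (by positivity)]
        simp
      _ ≤ ENNReal.ofReal (2 * T) * (ENNReal.ofReal ((2 * R) ^ n) * ENNReal.ofReal V) := by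
        rw [hV, ENNReal.ofReal_toReal measure_ball_lt_top.ne]
        gcongr
        have : 0 < 1 / R := by positivity
        linarith
      _ = ENNReal.ofReal (2 * T * ((2 * R) ^ n * V)) := by
        rw [ENNReal.ofReal_mul (p := 2 * T) (by positivity),
          ENNReal.ofReal_mul (p := (2 * R) ^ n) (by positivity)]
      _ ≤ _ := by
        apply ENNReal.ofReal_le_ofReal
        rw [Real.rpow_add hR0, Real.rpow_natCast, ← hT, mul_pow]
        have : 0 ≤ R ^ n * T := by positivity
        nlinarith
  · intro p
    have hd : HasDerivAt (fun s : ℝ => ψ (s, p.2))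
        (((-(deriv g (R * p.1) * R)) * g (p.1 * T⁻¹) +
          (1 - g (R * p.1)) * (deriv g (p.1 * T⁻¹) * T⁻¹)) * g (‖p.2‖ ^ 2 * (R ^ 2)⁻¹)) p.1 := by
      have k1 : HasDerivAt (fun s : ℝ => R * s) R p.1 := by
        simpa using (hasDerivAt_id p.1).const_mul R
      have k2 : HasDerivAt (fun s : ℝ => s * T⁻¹) T⁻¹ p.1 := by
        simpa using (hasDerivAt_id p.1).mul_const T⁻¹
      have k3 := ((hgd (R * p.1)).comp p.1 k1).const_sub 1
      have k4 := (hgd (p.1 * T⁻¹)).comp p.1 k2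
      exact (k3.mul k4).mul_const (g (‖p.2‖ ^ 2 * (R ^ 2)⁻¹))
    rw [pdT_eq (hψd p) hd]
    have q1 : 0 ≤ -(deriv g (R * p.1) * R) * g (p.1 * T⁻¹) :=
      mul_nonneg (by nlinarith [dneg (R * p.1)]) (g0 _)
    have gx0 := g0 (‖p.2‖ ^ 2 * (R ^ 2)⁻¹)
    have gx1 := g1 (‖p.2‖ ^ 2 * (R ^ 2)⁻¹)
    have gt0 := g0 (R * p.1)
    have gt1 := g1 (R * p.1)
    rw [hTi]
    by_cases hp : p ∈ ER n α R
    · rw [Set.indicator_of_mem hp]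
      have q2 : -((1 - g (R * p.1)) * (deriv g (p.1 * T⁻¹) * T⁻¹)) ≤ C * T⁻¹ := by
        have b := (abs_le.1 (dC (p.1 * T⁻¹))).1
        have b2 := dneg (p.1 * T⁻¹)
        have : 0 ≤ -(deriv g (p.1 * T⁻¹) * T⁻¹) := by
          rw [← neg_mul]; exact mul_nonneg (by linarith) (by positivity)
        calc -((1 - g (R * p.1)) * (deriv g (p.1 * T⁻¹) * T⁻¹)) =
            (1 - g (R * p.1)) * -(deriv g (p.1 * T⁻¹) * T⁻¹) := by ring
          _ ≤ 1 * -(deriv g (p.1 * T⁻¹) * T⁻¹) := by gcongr; linarith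
          _ = (-deriv g (p.1 * T⁻¹)) * T⁻¹ := by ring
          _ ≤ C * T⁻¹ := by gcongr; linarith
      have q3 : 0 ≤ C * T⁻¹ := by positivity
      have q4 : 0 ≤ C3 * T⁻¹ := by positivity
      have q5 : (C + C3) * T⁻¹ * 1 = C * T⁻¹ + C3 * T⁻¹ := by ring
      rw [q5]
      have q6 : -((-(deriv g (R * p.1) * R) * g (p.1 * T⁻¹) +
          (1 - g (R * p.1)) * (deriv g (p.1 * T⁻¹) * T⁻¹)) * g (‖p.2‖ ^ 2 * (R ^ 2)⁻¹)) ≤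
          C * T⁻¹ * g (‖p.2‖ ^ 2 * (R ^ 2)⁻¹) := by
        rw [← neg_mul]
        apply mul_le_mul_of_nonneg_right _ gx0
        linarith
      have q7 : C * T⁻¹ * g (‖p.2‖ ^ 2 * (R ^ 2)⁻¹) ≤ C * T⁻¹ := mul_le_of_le_one_right q3 gx1
      linarith
    · rw [Set.indicator_of_notMem hp]
      have ht : p.1 ≤ T := by
        by_contra hcon
        exact hp (Or.inl (not_le.1 hcon))
      rw [dl (p.1 * T⁻¹) (by rw [← div_eq_mul_inv, div_le_one hTp]; exact ht)]
      have := mul_nonneg q1 gx0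
      linarith
  · have h8 := hcond8 (2 * R) (by linarith)
    rw [ae_restrict_iff' (by
      have h1 : IsOpen {p : Pt n | 0 < p.1} := isOpen_lt continuous_const continuous_fst
      have h2 : IsOpen {p : Pt n | 2 * R / 2 < ‖p.2‖} :=
        isOpen_lt continuous_const continuous_snd.norm
      have h3 : IsOpen {p : Pt n | ‖p.2‖ < 2 * R} :=
        isOpen_lt continuous_snd.norm continuous_const
      exact (h1.inter (h2.inter h3)).measurableSet)] at h8
    have hSm : MeasurableSet (halfSpace n) :=
      (isOpen_lt continuous_const continuous_fst : IsOpen {p : Pt n | 0 < p.1}).measurableSet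
    filter_upwards [hform, ae_restrict_of_ae h8, ae_restrict_mem hSm] with p hfp h8p hpS
    -- the spatial derivative
    have hdx : ∀ i, pdX ψ i p = (1 - g (R * p.1)) * g (p.1 * T⁻¹) *
        (deriv g (‖p.2‖ ^ 2 * (R ^ 2)⁻¹) * (2 * p.2 i * (R ^ 2)⁻¹)) := by
      intro i
      apply pdX_eq (hψd p) i
      have k1 : HasDerivAt (fun s : ℝ => p.2 + s • (EuclideanSpace.single i (1 : ℝ) : Xn n))
          (EuclideanSpace.single i (1 : ℝ)) 0 := by
        have := ((hasDerivAt_id (0 : ℝ)).smul_const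
          (EuclideanSpace.single i (1 : ℝ) : Xn n)).const_add p.2
        simpa using this
      have k2 := k1.norm_sq.mul_const (R ^ 2)⁻¹
      have k3 : HasDerivAt g (deriv g (‖p.2‖ ^ 2 * (R ^ 2)⁻¹))
          (‖p.2 + (0 : ℝ) • (EuclideanSpace.single i (1 : ℝ) : Xn n)‖ ^ 2 * (R ^ 2)⁻¹) := by
        simpa using hgd (‖p.2‖ ^ 2 * (R ^ 2)⁻¹)
      have k4 := (k3.comp (0 : ℝ) k2).const_mul ((1 - g (R * p.1)) * g (p.1 * T⁻¹))
      have e : inner ℝ (p.2 + (0 : ℝ) • (EuclideanSpace.single i (1 : ℝ) : Xn n))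
          (EuclideanSpace.single i (1 : ℝ)) = p.2 i := by
        simp [EuclideanSpace.inner_single_right]
      rw [e] at k4
      exact k4
    by_cases hz : deriv g (‖p.2‖ ^ 2 * (R ^ 2)⁻¹) = 0
    · have hz0 : ∀ i, pdX ψ i p = 0 := fun i => by rw [hdx i, hz]; simp
      have : Qf a p (fun i => pdX ψ i p) (fun i => pdX ψ i p) = 0 := by
        simp [Qf, hz0]
      rw [this]
      exact mul_nonneg (by positivity) (Set.indicator_nonneg (fun _ _ => zero_le_one) _)
    · have hx1 : R < ‖p.2‖ := by
        by_contra hcon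
        exact hz (dl _ (hxin _ (not_lt.1 hcon)))
      have hx2 : ‖p.2‖ < 2 * R := by
        by_contra hcon
        apply hz (dr _ _)
        rw [← div_eq_mul_inv, le_div_iff₀ (by positivity)]
        nlinarith
      rw [Set.indicator_of_mem (show p ∈ ER n α R from Or.inr hx1)]
      have hAp : A p ≤ c * (2 * R) ^ (2 - α) := h8p ⟨hpS, by linarith, hx2⟩
      have hb : ∀ i, |pdX ψ i p| ≤ 4 * C * R⁻¹ := by
        intro i
        rw [hdx i, abs_mul, abs_mul, abs_mul]
        have b1 : |1 - g (R * p.1)| ≤ 1 := by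
          rw [abs_le]; constructor <;> linarith [g0 (R * p.1), g1 (R * p.1)]
        have b2 : |g (p.1 * T⁻¹)| ≤ 1 := by rw [abs_of_nonneg (g0 _)]; exact g1 _
        have b3 : |2 * p.2 i * (R ^ 2)⁻¹| ≤ 4 * R⁻¹ := by
          have : |p.2 i| ≤ ‖p.2‖ := by
            simpa using PiLp.norm_apply_le p.2 i
          rw [abs_mul, abs_mul, abs_of_pos (by positivity : 0 < (R ^ 2)⁻¹), abs_two]
          calc 2 * |p.2 i| * (R ^ 2)⁻¹ ≤ 2 * (2 * R) * (R ^ 2)⁻¹ := by gcongr; linarith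
            _ = 4 * R⁻¹ := by field_simp; norm_num
        calc _ ≤ 1 * 1 * (C * (4 * R⁻¹)) := by gcongr; exact dC _
          _ = _ := by ring
      have hQ := (hfp (WithLp.toLp 2 (fun i => pdX ψ i p))).2
      have hn2 : ‖(WithLp.toLp 2 (fun i => pdX ψ i p) : Xn n)‖ ^ 2 ≤ n * (4 * C * R⁻¹) ^ 2 := by
        rw [EuclideanSpace.norm_sq_eq]
        calc _ ≤ ∑ _i : Fin n, (4 * C * R⁻¹) ^ 2 := by
              apply Finset.sum_le_sum
              intro i _
              exact pow_le_pow_left₀ (norm_nonneg _) (hb i) 2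
          _ = _ := by simp
      calc Qf a p (fun i => pdX ψ i p) (fun i => pdX ψ i p)
          ≤ A p * ‖(WithLp.toLp 2 (fun i => pdX ψ i p) : Xn n)‖ ^ 2 := hQ
        _ ≤ (c * (2 * R) ^ (2 - α)) * (n * (4 * C * R⁻¹) ^ 2) := by
            gcongr
        _ = C3 * R ^ (-α) := by
            rw [Real.mul_rpow (by norm_num) hR0.le, hC3]
            have : R ^ (2 - α) = R ^ 2 * R ^ (-α) := by
              rw [← Real.rpow_natCast R 2, ← Real.rpow_add hR0]; congr 1
            rw [this]
            field_simp
        _ ≤ (C + C3) * R ^ (-α) * 1 := by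
            rw [mul_one]
            gcongr
            linarith
  · intro p h1 h2 h3
    simp only [hψ]
    rw [gr (R * p.1) (by rw [div_le_iff₀ hR0] at h1; linarith),
      gl (p.1 * T⁻¹) (by rw [← div_eq_mul_inv, div_le_one hTp]; exact h2), gl _ (hxin _ h3)]
    norm_num

/-! ### Integrability and extension of the class of test functions -/

lemma isOpen_halfSpace (n : ℕ) : IsOpen (halfSpace n) :=
  isOpen_lt continuous_const continuous_fst

/-- integrable on compact subsets of the half space -/
def LocInt {n : ℕ} (P : Pt n → ℝ) : Prop :=
  ∀ K : Set (Pt n), IsCompact K → K ⊆ halfSpace n → IntegrableOn P K volume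

lemma locInt_cont {n : ℕ} {P : Pt n → ℝ} (h : ContinuousOn P (halfSpace n)) : LocInt P :=
  fun _ hK hKS => (h.mono hKS).integrableOn_compact hK

lemma LocInt.mul_contOn {n : ℕ} {P g : Pt n → ℝ} (h : LocInt P)
    (hg : ContinuousOn g (halfSpace n)) : LocInt (fun p => P p * g p) :=
  fun K hK hKS => (h K hK hKS).mul_continuousOn (hg.mono hKS) hK

lemma LocInt.add {n : ℕ} {P g : Pt n → ℝ} (h : LocInt P) (hg : LocInt g) :
    LocInt (fun p => P p + g p) :=
  fun K hK hKS => (h K hK hKS).add (hg K hK hKS)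

lemma LocInt.neg {n : ℕ} {P : Pt n → ℝ} (h : LocInt P) : LocInt (fun p => - P p) :=
  fun K hK hKS => (h K hK hKS).neg

lemma LocInt.sum {n : ℕ} {ι : Type*} (s : Finset ι) {P : ι → Pt n → ℝ} (h : ∀ i, LocInt (P i)) :
    LocInt (fun p => ∑ i ∈ s, P i p) :=
  fun K hK hKS => integrable_finsetSum s fun i _ => h i K hK hKS

lemma locInt_coef {n : ℕ} {b : Pt n → ℝ} (hb : Measurable b)
    (hbd : ∀ K : Set (Pt n), IsCompact K → K ⊆ halfSpace n → ∃ M, ∀ p ∈ K, |b p| ≤ M) :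
    LocInt b := by
  intro K hK hKS
  obtain ⟨M, hM⟩ := hbd K hK hKS
  refine Measure.integrableOn_of_bounded (M := M) hK.measure_lt_top.ne hb.aestronglyMeasurable ?_
  filter_upwards [ae_restrict_mem hK.measurableSet] with p hp
  simpa using hM p hp

lemma LocInt.integrable_mul {n : ℕ} {P φ : Pt n → ℝ} (h : LocInt P) (hφ : Continuous φ)
    (hc : HasCompactSupport φ) (hS : tsupport φ ⊆ halfSpace n) :
    Integrable (fun p => P p * φ p) volume := by
  have h1 : IntegrableOn (fun p => P p * φ p) (tsupport φ) volume :=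
    (h _ hc hS).mul_continuousOn hφ.continuousOn hc
  refine (integrableOn_iff_integrable_of_support_subset ?_).1 h1
  intro p hp
  by_contra hcon
  apply hp
  simp [image_eq_zero_of_notMem_tsupport hcon]

lemma continuous_pdX {n : ℕ} {φ : Pt n → ℝ} (hφ : ContDiff ℝ 1 φ) (i : Fin n) :
    Continuous (pdX φ i) :=
  (hφ.continuous_fderiv one_ne_zero).clm_apply continuous_const

lemma continuous_pdT {n : ℕ} {φ : Pt n → ℝ} (hφ : ContDiff ℝ 1 φ) :
    Continuous (pdT φ) :=
  (hφ.continuous_fderiv one_ne_zero).clm_apply continuous_const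

lemma fderiv_zero_off {n : ℕ} {φ : Pt n → ℝ} {p : Pt n} (hp : p ∉ tsupport φ) :
    fderiv ℝ φ p = 0 :=
  image_eq_zero_of_notMem_tsupport fun h => hp (tsupport_fderiv_subset ℝ h)

lemma tsupport_pdX {n : ℕ} (φ : Pt n → ℝ) (i : Fin n) : tsupport (pdX φ i) ⊆ tsupport φ := by
  apply closure_minimal _ (isClosed_tsupport φ)
  intro p hp
  by_contra hcon
  exact hp (by simp [pdX, fderiv_zero_off hcon])

lemma tsupport_pdT {n : ℕ} (φ : Pt n → ℝ) : tsupport (pdT φ) ⊆ tsupport φ := by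
  apply closure_minimal _ (isClosed_tsupport φ)
  intro p hp
  by_contra hcon
  exact hp (by simp [pdT, fderiv_zero_off hcon])

lemma integrable_test {n : ℕ} {P : Pt n → ℝ} {H : Fin n → Pt n → ℝ} (hP : LocInt P)
    (hH : ∀ i, LocInt (H i)) {φ : Pt n → ℝ} (hφ : ContDiff ℝ 1 φ)
    (hc : HasCompactSupport φ) (hS : tsupport φ ⊆ halfSpace n) :
    Integrable (fun p => P p * φ p + ∑ i, H i p * pdX φ i p) volume := by
  refine (hP.integrable_mul hφ.continuous hc hS).add (integrable_finsetSum _ fun i _ => ?_)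
  exact (hH i).integrable_mul (continuous_pdX hφ i)
    (hc.of_isClosed_subset (isClosed_tsupport _) (tsupport_pdX φ i))
    ((tsupport_pdX φ i).trans hS)

instance instHaarPt (n : ℕ) : (volume : Measure (Pt n)).IsAddHaarMeasure :=
  inferInstanceAs ((volume : Measure ℝ).prod (volume : Measure (Xn n))).IsAddHaarMeasure

open ContinuousLinearMap Convolution in
lemma extend_test {n : ℕ} {P : Pt n → ℝ} {H : Fin n → Pt n → ℝ} (hP : LocInt P)
    (hH : ∀ i, LocInt (H i))
    (h : ∀ φ : Pt n → ℝ, ContDiff ℝ (⊤ : ℕ∞) φ → HasCompactSupport φ →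
      tsupport φ ⊆ halfSpace n → (∀ p, 0 ≤ φ p) →
      0 ≤ ∫ p in halfSpace n, (P p * φ p + ∑ i, H i p * pdX φ i p))
    {φ : Pt n → ℝ} (hφ : ContDiff ℝ 1 φ)
    (hc : HasCompactSupport φ) (hS : tsupport φ ⊆ halfSpace n) (h0 : ∀ p, 0 ≤ φ p) :
    0 ≤ ∫ p in halfSpace n, (P p * φ p + ∑ i, H i p * pdX φ i p) := by
  obtain ⟨δ, hδ, hδS⟩ := IsCompact.exists_cthickening_subset_open hc (isOpen_halfSpace n) hS
  set K := Metric.cthickening δ (tsupport φ) with hK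
  have hKc : IsCompact K := IsCompact.cthickening hc
  let b : ℕ → ContDiffBump (0 : Pt n) := fun k =>
    ⟨δ / (k + 1) / 2, δ / (k + 1), by positivity, half_lt_self (by positivity)⟩
  have hbr : ∀ k, (b k).rOut ≤ δ := fun k => by
    change δ / (k + 1) ≤ δ
    apply div_le_self hδ.le
    have : (0 : ℝ) ≤ k := by positivity
    linarith
  have hbt : Filter.Tendsto (fun k => (b k).rOut) Filter.atTop (nhds 0) :=
    by
      have h1 := (tendsto_one_div_add_atTop_nhds_zero_nat (𝕜 := ℝ)).const_mul δ
      rw [mul_zero] at h1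
      refine h1.congr fun k => ?_
      change δ * (1 / ((k : ℝ) + 1)) = δ / (k + 1)
      ring
  let φk : ℕ → Pt n → ℝ := fun k => (b k).normed volume ⋆[lsmul ℝ ℝ, volume] φ
  let Dk : ℕ → Pt n → (Pt n →L[ℝ] ℝ) := fun k =>
    (b k).normed volume ⋆[lsmul ℝ ℝ, volume] (fderiv ℝ φ)
  have hD : Continuous (fderiv ℝ φ) := hφ.continuous_fderiv one_ne_zero
  have hDk : ∀ k p, fderiv ℝ (φk k) p = Dk k p := by
    intro k p
    have hb1 : LocallyIntegrable ((b k).normed (volume : Measure (Pt n))) volume :=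
      ((b k).contDiff_normed (n := 0)).continuous.locallyIntegrable
    have := (hc.hasFDerivAt_convolution_right (lsmul ℝ ℝ) hb1 hφ p).fderiv
    exact this
  -- vanishing off K
  have hoff : ∀ k p, p ∉ K → φk k p = 0 ∧ Dk k p = 0 := by
    intro k p hp
    have hz : ∀ x ∈ Metric.ball p (b k).rOut, x ∉ tsupport φ := by
      intro x hx hxt
      apply hp
      apply Metric.mem_cthickening_of_dist_le p x δ _ hxt
      rw [dist_comm]
      exact (Metric.mem_ball.1 hx).le.trans (hbr k)
    have hpp := hz p (Metric.mem_ball_self (b k).rOut_pos)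
    constructor
    · have := (b k).normed_convolution_eq_right (μ := volume) (g := φ) (x₀ := p) (fun x hx => by
        rw [image_eq_zero_of_notMem_tsupport (hz x hx), image_eq_zero_of_notMem_tsupport hpp])
      exact this.trans (image_eq_zero_of_notMem_tsupport hpp)
    · have := (b k).normed_convolution_eq_right (μ := volume) (g := fderiv ℝ φ) (x₀ := p)
        (fun x hx => by
        rw [fderiv_zero_off (hz x hx), fderiv_zero_off hpp])
      exact this.trans (fderiv_zero_off hpp)
  -- bounds
  obtain ⟨M1, hM1⟩ := hφ.continuous.bounded_above_of_compact_support hc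
  obtain ⟨M2, hM2⟩ := hD.bounded_above_of_compact_support (hc.fderiv ℝ)
  have hb1 : ∀ k p, ‖φk k p‖ ≤ 3 * M1 := by
    intro k p
    have := (b k).dist_normed_convolution_le (μ := volume) (g := φ) (x₀ := p) (ε := 2 * M1)
      hφ.continuous.aestronglyMeasurable (fun x _ => by
        rw [dist_eq_norm]
        have := norm_sub_le (φ x) (φ p)
        linarith [hM1 x, hM1 p])
    rw [dist_eq_norm] at this
    have h2 := norm_sub_norm_le (φk k p) (φ p)
    have h3 : ‖φk k p - φ p‖ ≤ 2 * M1 := this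
    linarith [hM1 p]
  have hb2 : ∀ k p, ‖Dk k p‖ ≤ 3 * M2 := by
    intro k p
    have := (b k).dist_normed_convolution_le (μ := volume) (g := fderiv ℝ φ) (x₀ := p)
      (ε := 2 * M2)
      hD.aestronglyMeasurable (fun x _ => by
        rw [dist_eq_norm]
        have := norm_sub_le (fderiv ℝ φ x) (fderiv ℝ φ p)
        linarith [hM2 x, hM2 p])
    rw [dist_eq_norm] at this
    have h2 := norm_sub_norm_le (Dk k p) (fderiv ℝ φ p)
    have h3 : ‖Dk k p - fderiv ℝ φ p‖ ≤ 2 * M2 := this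
    linarith [hM2 p]
  have hs : ∀ k, tsupport (φk k) ⊆ K := by
    intro k
    apply closure_minimal _ hKc.isClosed
    intro p hp
    by_contra hcon
    exact hp (hoff k p hcon).1
  have hsm : ∀ k, ContDiff ℝ (⊤ : ℕ∞) (φk k) := fun k =>
    HasCompactSupport.contDiff_convolution_left (lsmul ℝ ℝ) (b k).hasCompactSupport_normed
      (b k).contDiff_normed hφ.continuous.locallyIntegrable
  have hck : ∀ k, HasCompactSupport (φk k) := fun k =>
    hKc.of_isClosed_subset (isClosed_tsupport _) (hs k)
  have hpos : ∀ k p, 0 ≤ φk k p := by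
    intro k p
    apply integral_nonneg
    intro t
    simp only [lsmul_apply, smul_eq_mul]
    exact mul_nonneg ((b k).nonneg_normed _) (h0 _)
  have hk := fun k => h (φk k) (hsm k) (hck k) ((hs k).trans hδS) (hpos k)
  -- limit
  have hlim : Filter.Tendsto
      (fun k => ∫ p in halfSpace n, (P p * φk k p + ∑ i, H i p * pdX (φk k) i p)) Filter.atTop
      (nhds (∫ p in halfSpace n, (P p * φ p + ∑ i, H i p * pdX φ i p))) := by
    apply tendsto_integral_of_dominated_convergence
      (K.indicator (fun p => |P p| * (3 * M1) + ∑ i, |H i p| * (3 * M2)))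
    · intro k
      exact (integrable_test hP hH ((hsm k).of_le (by norm_cast)) (hck k)
        ((hs k).trans hδS)).aestronglyMeasurable.restrict
    · apply Integrable.restrict
      rw [integrable_indicator_iff hKc.measurableSet]
      refine Integrable.add ((hP K hKc hδS).abs.mul_const _)
        (integrable_finsetSum _ fun i _ => (hH i K hKc hδS).abs.mul_const _)
    · intro k
      refine Filter.Eventually.of_forall fun p => ?_
      by_cases hp : p ∈ K
      · rw [Set.indicator_of_mem hp]
        refine (norm_add_le _ _).trans (add_le_add ?_ ((norm_sum_le _ _).trans
          (Finset.sum_le_sum fun i _ => ?_)))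
        · rw [norm_mul]
          exact mul_le_mul_of_nonneg_left (hb1 k p) (abs_nonneg _)
        · rw [norm_mul]
          apply mul_le_mul_of_nonneg_left _ (abs_nonneg _)
          unfold pdX
          rw [hDk]
          refine (le_opNorm _ _).trans ?_
          have e : ‖((0, EuclideanSpace.single i 1) : Pt n)‖ = 1 := by
            simp [Prod.norm_def]
          rw [e, mul_one]
          exact hb2 k p
      · rw [Set.indicator_of_notMem hp]
        have h1 := (hoff k p hp).1
        have h2 : ∀ i, pdX (φk k) i p = 0 := fun i => by
          unfold pdX; rw [hDk, (hoff k p hp).2]; simp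
        simp [h1, h2]
    · refine Filter.Eventually.of_forall fun p => ?_
      refine Filter.Tendsto.add (Filter.Tendsto.const_mul _ ?_)
        (tendsto_finsetSum _ fun i _ => Filter.Tendsto.const_mul _ ?_)
      · exact ContDiffBump.convolution_tendsto_right_of_continuous hbt hφ.continuous p
      · have h1 : Filter.Tendsto (fun k => Dk k p) Filter.atTop (nhds (fderiv ℝ φ p)) :=
          ContDiffBump.convolution_tendsto_right_of_continuous hbt hD p
        unfold pdX
        simp only [hDk]
        exact ((ContinuousLinearMap.apply ℝ ℝ
          ((0, EuclideanSpace.single i 1) : Pt n)).continuous.tendsto _).comp h1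
  exact ge_of_tendsto' hlim hk

/-! ### The weak inequality for the difference -/

lemma contOn_fderiv {n : ℕ} {u : Pt n → ℝ} (hu : ContDiffOn ℝ 1 u (halfSpace n)) :
    ContinuousOn (fderiv ℝ u) (halfSpace n) :=
  hu.continuousOn_fderiv_of_isOpen (isOpen_halfSpace n) le_rfl

lemma contOn_pdT {n : ℕ} {u : Pt n → ℝ} (hu : ContDiffOn ℝ 1 u (halfSpace n)) :
    ContinuousOn (pdT u) (halfSpace n) :=
  (contOn_fderiv hu).clm_apply continuousOn_const

lemma contOn_pdX {n : ℕ} {u : Pt n → ℝ} (hu : ContDiffOn ℝ 1 u (halfSpace n)) (i : Fin n) :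
    ContinuousOn (pdX u i) (halfSpace n) :=
  (contOn_fderiv hu).clm_apply continuousOn_const

lemma diffAt_of {n : ℕ} {u : Pt n → ℝ} (hu : ContDiffOn ℝ 1 u (halfSpace n)) {p : Pt n}
    (hp : p ∈ halfSpace n) : DifferentiableAt ℝ u p :=
  (hu.differentiableOn one_ne_zero).differentiableAt ((isOpen_halfSpace n).mem_nhds hp)

/-- the integrand of the weak inequality for the difference -/
def Wint {n : ℕ} (a : Fin n → Fin n → Pt n → ℝ) (q : ℝ) (u v φ : Pt n → ℝ) (p : Pt n) : ℝ :=
  pdT (fun p => u p - v p) p * φ p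
    + Qf a p (fun i => pdX φ i p) (fun j => pdX (fun p => u p - v p) j p)
    - (oddPow q (u p) - oddPow q (v p)) * φ p

lemma weak_diff {n : ℕ} {q : ℝ} (hq1 : 1 < q)
    (a : Fin n → Fin n → Pt n → ℝ)
    (ha_meas : ∀ i j, Measurable (a i j))
    (ha_locbdd : ∀ i j, ∀ K : Set (Pt n), IsCompact K → K ⊆ halfSpace n →
      ∃ M, ∀ p ∈ K, |a i j p| ≤ M)
    (u v : Pt n → ℝ)
    (hu : ContDiffOn ℝ 1 u (halfSpace n)) (hv : ContDiffOn ℝ 1 v (halfSpace n))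
    (hsupersol : WeakSuperSol a q u)
    (hsubsol : WeakSubSol a q v)
    {φ : Pt n → ℝ} (hφ : ContDiff ℝ 1 φ)
    (hc : HasCompactSupport φ) (hS : tsupport φ ⊆ halfSpace n) (h0 : ∀ p, 0 ≤ φ p) :
    IntegrableOn (Wint a q u v φ) (halfSpace n) ∧ 0 ≤ ∫ p in halfSpace n, Wint a q u v φ p := by
  have hmS : MeasurableSet (halfSpace n) := (isOpen_halfSpace n).measurableSet
  have hPf : ∀ f : Pt n → ℝ, ContDiffOn ℝ 1 f (halfSpace n) →
      LocInt (fun p => pdT f p - oddPow q (f p)) := fun f hf =>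
    locInt_cont ((contOn_pdT hf).sub ((continuous_oddPow hq1).comp_continuousOn hf.continuousOn))
  have hHf : ∀ f : Pt n → ℝ, ContDiffOn ℝ 1 f (halfSpace n) → ∀ i,
      LocInt (fun p => ∑ j, a i j p * pdX f j p) := fun f hf i =>
    LocInt.sum _ fun j => (locInt_coef (ha_meas i j) (ha_locbdd i j)).mul_contOn (contOn_pdX hf j)
  have key : ∀ (f φ : Pt n → ℝ) (p : Pt n),
      pdT f p * φ p + ∑ i, ∑ j, a i j p * pdX φ i p * pdX f j p - oddPow q (f p) * φ p
      = (pdT f p - oddPow q (f p)) * φ p + ∑ i, (∑ j, a i j p * pdX f j p) * pdX φ i p := by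
    intro f φ p
    have : ∑ i, ∑ j, a i j p * pdX φ i p * pdX f j p
        = ∑ i, (∑ j, a i j p * pdX f j p) * pdX φ i p := by
      refine Finset.sum_congr rfl fun i _ => ?_
      rw [Finset.sum_mul]
      exact Finset.sum_congr rfl fun j _ => by ring
    rw [this]; ring
  have h1 := extend_test (hPf u hu) (hHf u hu) (fun φ h1 h2 h3 h4 => by
    have := hsupersol φ h1 h2 h3 h4
    simpa only [key] using this) hφ hc hS h0
  have h2 := extend_test (hPf v hv).neg (fun i => (hHf v hv i).neg) (fun φ h1 h2 h3 h4 => by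
    have := hsubsol φ h1 h2 h3 h4
    simp only [key] at this
    rw [← neg_nonneg, ← integral_neg] at this
    convert this using 3 with p
    rw [neg_add, ← Finset.sum_neg_distrib]
    simp only [neg_mul]) hφ hc hS h0
  have i1 := (integrable_test (hPf u hu) (hHf u hu) hφ hc hS).restrict (s := halfSpace n)
  have i2 := (integrable_test (hPf v hv).neg (fun i => (hHf v hv i).neg) hφ hc hS).restrict
    (s := halfSpace n)
  have e : ∀ p ∈ halfSpace n, ((pdT u p - oddPow q (u p)) * φ p
        + ∑ i, (∑ j, a i j p * pdX u j p) * pdX φ i p)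
      + (-(pdT v p - oddPow q (v p)) * φ p
        + ∑ i, (-∑ j, a i j p * pdX v j p) * pdX φ i p) = Wint a q u v φ p := by
    intro p hp
    have hd : fderiv ℝ (fun p => u p - v p) p = fderiv ℝ u p - fderiv ℝ v p :=
      fderiv_fun_sub (diffAt_of hu hp) (diffAt_of hv hp)
    have e1 : pdT (fun p => u p - v p) p = pdT u p - pdT v p := by
      simp [pdT, hd]
    have e2 : ∀ j, pdX (fun p => u p - v p) j p = pdX u j p - pdX v j p := by
      intro j
      simp [pdX, hd]
    unfold Wint Qf
    simp only [e1, e2]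
    have h3 : ∑ i, ∑ j, a i j p * pdX φ i p * (pdX u j p - pdX v j p)
        = ∑ i, (∑ j, a i j p * pdX u j p) * pdX φ i p
          + ∑ i, (-∑ j, a i j p * pdX v j p) * pdX φ i p := by
      rw [← Finset.sum_add_distrib]
      refine Finset.sum_congr rfl fun i _ => ?_
      rw [← add_mul, ← sub_eq_add_neg, ← Finset.sum_sub_distrib, Finset.sum_mul]
      exact Finset.sum_congr rfl fun j _ => by ring
    rw [h3]; ring
  have hae : (fun p => ((pdT u p - oddPow q (u p)) * φ p
        + ∑ i, (∑ j, a i j p * pdX u j p) * pdX φ i p)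
      + (-(pdT v p - oddPow q (v p)) * φ p
        + ∑ i, (-∑ j, a i j p * pdX v j p) * pdX φ i p)) =ᵐ[volume.restrict (halfSpace n)]
        Wint a q u v φ := by
    filter_upwards [ae_restrict_mem hmS] with p hp using e p hp
  refine ⟨(i1.add i2).congr hae, ?_⟩
  rw [← integral_congr_ae hae, integral_add i1 i2]
  exact add_nonneg h1 h2

lemma contDiff_mul_cutoff {n : ℕ} {g ψ : Pt n → ℝ} (hg : ContDiffOn ℝ 1 g (halfSpace n))
    (hψ : ContDiff ℝ 1 ψ) (hS : tsupport ψ ⊆ halfSpace n) :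
    ContDiff ℝ 1 (fun p => g p * ψ p) := by
  rw [contDiff_iff_contDiffAt]
  intro p
  by_cases hp : p ∈ tsupport ψ
  · exact (hg.contDiffAt ((isOpen_halfSpace n).mem_nhds (hS hp))).mul hψ.contDiffAt
  · have : (fun p => g p * ψ p) =ᶠ[nhds p] fun _ => 0 := by
      filter_upwards [notMem_tsupport_iff_eventuallyEq.1 hp] with x hx
      simp [hx]
    exact contDiffAt_const.congr_of_eventuallyEq this

lemma tsupport_mul_sub {n : ℕ} (g ψ : Pt n → ℝ) :
    tsupport (fun p => g p * ψ p) ⊆ tsupport ψ := by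
  apply closure_mono
  intro p hp h
  exact hp (by simp [h])

lemma integral_pdT {n : ℕ} {F : Pt n → ℝ} (hF : ContDiff ℝ 1 F) (hc : HasCompactSupport F)
    (hS : tsupport F ⊆ halfSpace n) :
    IntegrableOn (pdT F) (halfSpace n) ∧ ∫ p in halfSpace n, pdT F p = 0 := by
  have hi : Integrable (pdT F) volume := (continuous_pdT hF).integrable_of_hasCompactSupport
    (hc.of_isClosed_subset (isClosed_tsupport _) (tsupport_pdT F))
  refine ⟨hi.integrableOn, ?_⟩
  rw [setIntegral_eq_integral_of_forall_compl_eq_zero]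
  · have h1 := integral_mul_fderiv_eq_neg_fderiv_mul_of_integrable (μ := (volume : Measure (Pt n)))
      (f := fun _ => (1 : ℝ)) (g := F) (v := ((1, 0) : Pt n)) (by simp)
      (by simp only [one_mul]; exact hi) (by simpa using hF.continuous.integrable_of_hasCompactSupport hc)
      (fun x _ => by fun_prop) (fun x _ => hF.differentiable one_ne_zero x)
    simpa [pdT] using h1
  · intro p hp
    have : p ∉ tsupport F := fun h => hp (hS h)
    simp [pdT, fderiv_zero_off this]

/-! ### Integral estimates -/

/-- the standing assumptions -/
structure Setup {n : ℕ} (a : Fin n → Fin n → Pt n → ℝ) (q : ℝ) (u v : Pt n → ℝ) : Prop where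
  hq1 : 1 < q
  ha_meas : ∀ i j, Measurable (a i j)
  ha_locbdd : ∀ i j, ∀ K : Set (Pt n), IsCompact K → K ⊆ halfSpace n →
      ∃ M, ∀ p ∈ K, |a i j p| ≤ M
  hsymm : ∀ᵐ p ∂(volume.restrict (halfSpace n)), ∀ i j, a i j p = a j i p
  hpos : ∀ᵐ p ∂(volume.restrict (halfSpace n)), ∀ ξ : Xn n, 0 ≤ ∑ i, ∑ j, a i j p * ξ i * ξ j
  hu : ContDiffOn ℝ 1 u (halfSpace n)
  hv : ContDiffOn ℝ 1 v (halfSpace n)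
  hsup : WeakSuperSol a q u
  hsub : WeakSubSol a q v
  huv : ∀ p ∈ halfSpace n, v p ≤ u p

/-- properties of the cut-off function -/
structure Cut {n : ℕ} (a : Fin n → Fin n → Pt n → ℝ) (C1 r V : ℝ) (E : Set (Pt n))
    (ψ : Pt n → ℝ) : Prop where
  smooth : ContDiff ℝ 1 ψ
  compact : HasCompactSupport ψ
  supp : tsupport ψ ⊆ halfSpace n
  nonneg : ∀ p, 0 ≤ ψ p
  le_one : ∀ p, ψ p ≤ 1
  vol : volume (tsupport ψ) ≤ ENNReal.ofReal V
  dT : ∀ p, - pdT ψ p ≤ C1 * r * E.indicator (fun _ => (1 : ℝ)) p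
  dX : ∀ᵐ p ∂(volume.restrict (halfSpace n)),
    Qf a p (fun i => pdX ψ i p) (fun i => pdX ψ i p) ≤ C1 * r * E.indicator (fun _ => (1 : ℝ)) p

lemma fderiv_prod {n : ℕ} {w ψ : Pt n → ℝ} {p : Pt n} (β ε : ℝ) (m : ℕ)
    (hw : DifferentiableAt ℝ w p) (hψ : DifferentiableAt ℝ ψ p) (h : w p + ε ≠ 0 ∨ 1 ≤ β)
    (e : Pt n) :
    fderiv ℝ (fun p => (w p + ε) ^ β * ψ p ^ (m + 2)) p e
      = (β * (w p + ε) ^ (β - 1) * ψ p ^ (m + 2)) * fderiv ℝ w p e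
        + ((m + 2) * (w p + ε) ^ β * ψ p ^ (m + 1)) * fderiv ℝ ψ p e := by
  have h1 : HasFDerivAt (fun p => (w p + ε) ^ β) _ p :=
    HasFDerivAt.rpow_const (hw.hasFDerivAt.add_const ε) h
  have h2 := (hasDerivAt_pow (m + 2) (ψ p)).comp_hasFDerivAt p hψ.hasFDerivAt
  have h3 := (h1.mul h2).fderiv
  change fderiv ℝ (fun p => (w p + ε) ^ β * ψ p ^ (m + 2)) p = _ at h3
  rw [h3]
  simp only [_root_.add_apply, _root_.smul_apply, smul_eq_mul, Function.comp_apply]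
  push_cast
  ring

/-- the energy density -/
def X2 {n : ℕ} (a : Fin n → Fin n → Pt n → ℝ) (w ψ : Pt n → ℝ) (ν ε : ℝ) (m : ℕ) (p : Pt n) : ℝ :=
  (w p + ε) ^ (-ν - 1) * ψ p ^ (m + 2) * Qf a p (fun i => pdX w i p) (fun i => pdX w i p)

namespace Setup

variable {n : ℕ} {a : Fin n → Fin n → Pt n → ℝ} {q : ℝ} {u v : Pt n → ℝ}

lemma wC1 (S : Setup a q u v) : ContDiffOn ℝ 1 (fun p => u p - v p) (halfSpace n) :=
  S.hu.sub S.hv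

lemma pow_ne (S : Setup a q u v) {ε : ℝ} (hε : 0 < ε) (β : ℝ) :
    ContDiffOn ℝ 1 (fun p => ((u p - v p) + ε) ^ β) (halfSpace n) := by
  apply ContDiffOn.rpow_const_of_ne (S.wC1.add contDiffOn_const)
  intro p hp
  have := S.huv p hp
  exact ne_of_gt (by linarith)

lemma X2_int (S : Setup a q u v) {ψ : Pt n → ℝ} (hψ : ContDiff ℝ 1 ψ)
    (hc : HasCompactSupport ψ) (hS : tsupport ψ ⊆ halfSpace n) (ν ε : ℝ) (hε : 0 < ε) (m : ℕ) :
    IntegrableOn (X2 a (fun p => u p - v p) ψ ν ε m) (halfSpace n) := by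
  have h1 : LocInt (fun p => Qf a p (fun i => pdX (fun p => u p - v p) i p)
      (fun i => pdX (fun p => u p - v p) i p)) := by
    unfold Qf
    refine LocInt.sum _ fun i => LocInt.sum _ fun j => ?_
    exact ((locInt_coef (S.ha_meas i j) (S.ha_locbdd i j)).mul_contOn
      (contOn_pdX S.wC1 i)).mul_contOn (contOn_pdX S.wC1 j)
  have h2 := h1.mul_contOn (S.pow_ne hε (-ν - 1)).continuousOn
  have hsub : tsupport (fun p => ψ p ^ (m + 2)) ⊆ tsupport ψ := by
    apply closure_mono
    intro p hp h
    exact hp (by simp [h])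
  have h3 := h2.integrable_mul (φ := fun p => ψ p ^ (m + 2)) (hψ.continuous.pow _)
    (hc.of_isClosed_subset (isClosed_tsupport _) hsub) (hsub.trans hS)
  refine (h3.congr ?_).integrableOn
  refine Filter.Eventually.of_forall fun p => ?_
  simp only [X2]
  ring

end Setup

lemma tsupport_pow_sub {n : ℕ} (ψ : Pt n → ℝ) (m : ℕ) :
    tsupport (fun p => ψ p ^ (m + 2)) ⊆ tsupport ψ := by
  apply closure_mono
  intro p hp h
  exact hp (by simp [h])

lemma int_ind {n : ℕ} {ψ : Pt n → ℝ} {V κ : ℝ} (hV : 0 ≤ V) (hκ : 0 ≤ κ)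
    (hc : HasCompactSupport ψ)
    (hvol : volume (tsupport ψ) ≤ ENNReal.ofReal V) :
    IntegrableOn ((tsupport ψ).indicator (fun _ => κ)) (halfSpace n) ∧
    ∫ p in halfSpace n, (tsupport ψ).indicator (fun _ => κ) p ≤ κ * V := by
  have hm : MeasurableSet (tsupport ψ) := (isClosed_tsupport ψ).measurableSet
  have hi : Integrable ((tsupport ψ).indicator (fun _ => κ)) volume := by
    rw [integrable_indicator_iff hm]
    exact integrableOn_const hc.isCompact.measure_lt_top.ne
  refine ⟨hi.integrableOn, ?_⟩
  calc ∫ p in halfSpace n, (tsupport ψ).indicator (fun _ => κ) p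
      ≤ ∫ p, (tsupport ψ).indicator (fun _ => κ) p :=
        setIntegral_le_integral hi (Filter.Eventually.of_forall fun p =>
          Set.indicator_nonneg (fun _ _ => hκ) p)
    _ = κ * (volume (tsupport ψ)).toReal := by
        rw [integral_indicator hm, setIntegral_const, smul_eq_mul, mul_comm]; rfl
    _ ≤ κ * V := by
        apply mul_le_mul_of_nonneg_left _ hκ
        exact ENNReal.toReal_le_of_le_ofReal hV hvol

lemma Setup.step1 {n : ℕ} {a : Fin n → Fin n → Pt n → ℝ} {q : ℝ} {u v : Pt n → ℝ}
    (S : Setup a q u v) (ν C1 : ℝ) (m : ℕ) (hν0 : 0 < ν) (hν1 : ν < 1) (hC1 : 0 < C1)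
    (hm0 : 0 < m) (hm : (m + 2 : ℝ) * ((1 - ν) / (q - ν)) ≤ m) :
    ∃ K : ℝ, 0 ≤ K ∧ ∀ (ε ρ r V : ℝ) (E : Set (Pt n)) (ψ : Pt n → ℝ), Cut a C1 r V E ψ →
      0 < ε → 0 ≤ r → 0 ≤ V → ρ = r ^ (1 / (1 - (1 - ν) / (q - ν))) → ε ^ (q - ν) ≤ ρ →
      ν / 2 * ∫ p in halfSpace n, X2 a (fun p => u p - v p) ψ ν ε m p ≤ K * ρ * V := by
  obtain ⟨K, hK, hpt⟩ := pointwise1 q ν C1 m S.hq1 hν0 hν1 hC1 hm0 hm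
  refine ⟨K, hK, ?_⟩
  intro ε ρ r V E ψ hψ hε hr hV hρ hερ
  have hmS : MeasurableSet (halfSpace n) := (isOpen_halfSpace n).measurableSet
  have hρ0 : 0 ≤ ρ := by rw [hρ]; positivity
  set w : Pt n → ℝ := fun p => u p - v p with hw
  have hw0 : ∀ p ∈ halfSpace n, 0 ≤ w p := fun p hp => sub_nonneg.2 (S.huv p hp)
  have hps : ContDiff ℝ 1 (fun p => ψ p ^ (m + 2)) := hψ.smooth.pow _
  have hts := tsupport_pow_sub ψ m
  -- test function
  set φ : Pt n → ℝ := fun p => (w p + ε) ^ (-ν) * ψ p ^ (m + 2) with hφ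
  have hφ1 : ContDiff ℝ 1 φ := contDiff_mul_cutoff (S.pow_ne hε (-ν)) hps (hts.trans hψ.supp)
  have hφt : tsupport φ ⊆ tsupport ψ := (tsupport_mul_sub _ _).trans hts
  have hφc : HasCompactSupport φ := hψ.compact.of_isClosed_subset (isClosed_tsupport _) hφt
  have hφ0 : ∀ p, 0 ≤ φ p := by
    intro p
    by_cases hp : p ∈ halfSpace n
    · exact mul_nonneg (Real.rpow_nonneg (by linarith [hw0 p hp]) _) (pow_nonneg (hψ.nonneg p) _)
    · have : ψ p = 0 := image_eq_zero_of_notMem_tsupport fun h => hp (hψ.supp h)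
      simp [hφ, this]
  obtain ⟨hWi, hW0⟩ := weak_diff S.hq1 a S.ha_meas S.ha_locbdd u v S.hu S.hv S.hsup S.hsub
    hφ1 hφc (hφt.trans hψ.supp) hφ0
  -- time derivative
  set F : Pt n → ℝ := fun p => (w p + ε) ^ (1 - ν) * ψ p ^ (m + 2) with hF
  have hF1 : ContDiff ℝ 1 F := contDiff_mul_cutoff (S.pow_ne hε (1 - ν)) hps (hts.trans hψ.supp)
  have hFt : tsupport F ⊆ tsupport ψ := (tsupport_mul_sub _ _).trans hts
  obtain ⟨hFi, hF0⟩ := integral_pdT hF1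
    (hψ.compact.of_isClosed_subset (isClosed_tsupport _) hFt) (hFt.trans hψ.supp)
  obtain ⟨hIi, hI⟩ := int_ind (κ := K * ρ) hV (by positivity) hψ.compact hψ.vol
  have hXi := S.X2_int hψ.smooth hψ.compact hψ.supp ν ε hε m
  -- pointwise bound
  have hae : ∀ᵐ p ∂(volume.restrict (halfSpace n)), Wint a q u v φ p ≤
      (1 / (1 - ν)) * pdT F p - ν / 2 * X2 a w ψ ν ε m p
        + (tsupport ψ).indicator (fun _ => K * ρ) p := by
    filter_upwards [ae_restrict_mem hmS, S.hsymm, S.hpos, hψ.dX] with p hp hsy hpo hdX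
    by_cases hpt' : p ∈ tsupport ψ
    · rw [Set.indicator_of_mem hpt']
      have hdw : DifferentiableAt ℝ w p := diffAt_of S.wC1 hp
      have hdψ : DifferentiableAt ℝ ψ p := hψ.smooth.differentiable one_ne_zero p
      have hne : w p + ε ≠ 0 ∨ (1 : ℝ) ≤ -ν := Or.inl (by linarith [hw0 p hp])
      have hne2 : w p + ε ≠ 0 ∨ (1 : ℝ) ≤ 1 - ν := Or.inl (by linarith [hw0 p hp])
      have hE1 : E.indicator (fun _ => (1 : ℝ)) p ≤ 1 := by
        by_cases h : p ∈ E <;> simp [h]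
      have hle : C1 * r * E.indicator (fun _ => (1 : ℝ)) p ≤ C1 * r :=
        mul_le_of_le_one_right (by positivity) hE1
      have key := hpt ε ρ r (w p) (ψ p) (pdT w p) (pdT ψ p)
        (Qf a p (fun i => pdX w i p) (fun i => pdX w i p))
        (Qf a p (fun i => pdX ψ i p) (fun i => pdX w i p))
        (Qf a p (fun i => pdX ψ i p) (fun i => pdX ψ i p))
        (oddPow q (u p) - oddPow q (v p)) hε hr (hw0 p hp) (hψ.nonneg p) (hψ.le_one p) hρ hερ
        (fun x y => Qf_cs a p hsy hpo _ _ x y) (hdX.trans hle) ((hψ.dT p).trans hle)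
        (oddPow_sub S.hq1 (S.huv p hp))
      have eT : pdT F p = ((1 - ν) * (w p + ε) ^ (-ν) * ψ p ^ (m + 2)) * pdT w p
          + ((m + 2) * (w p + ε) ^ (1 - ν) * ψ p ^ (m + 1)) * pdT ψ p := by
        have := fderiv_prod (1 - ν) ε m hdw hdψ hne2 (1, 0)
        rw [show (1 - ν - 1) = -ν by ring] at this
        exact this
      have eX : ∀ i, pdX φ i p = (-ν * (w p + ε) ^ (-ν - 1) * ψ p ^ (m + 2)) * pdX w i p
          + ((m + 2) * (w p + ε) ^ (-ν) * ψ p ^ (m + 1)) * pdX ψ i p := fun i =>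
        fderiv_prod (-ν) ε m hdw hdψ hne _
      have eQ : Wint a q u v φ p = pdT w p * ((w p + ε) ^ (-ν) * ψ p ^ (m + 2))
          + (-ν * (w p + ε) ^ (-ν - 1) * ψ p ^ (m + 2)
              * Qf a p (fun i => pdX w i p) (fun i => pdX w i p)
            + (m + 2) * (w p + ε) ^ (-ν) * ψ p ^ (m + 1)
              * Qf a p (fun i => pdX ψ i p) (fun i => pdX w i p))
          - (oddPow q (u p) - oddPow q (v p)) * ((w p + ε) ^ (-ν) * ψ p ^ (m + 2)) := by
        unfold Wint
        simp only [eX]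
        rw [Qf_lin]
      rw [eQ, eT]
      refine key.trans (le_of_eq ?_)
      have : (1 - ν) ≠ 0 := by linarith
      simp only [X2]
      field_simp
    · rw [Set.indicator_of_notMem hpt']
      have h1 : ψ p = 0 := image_eq_zero_of_notMem_tsupport hpt'
      have h2 : fderiv ℝ φ p = 0 := fderiv_zero_off fun h => hpt' (hφt h)
      have h3 : fderiv ℝ F p = 0 := fderiv_zero_off fun h => hpt' (hFt h)
      have h4 : φ p = 0 := image_eq_zero_of_notMem_tsupport fun h => hpt' (hφt h)
      have e1 : X2 a w ψ ν ε m p = 0 := by simp [X2, h1]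
      have e2 : Wint a q u v φ p = 0 := by simp [Wint, h4, pdX, h2, Qf]
      have e3 : pdT F p = 0 := by simp [pdT, h3]
      rw [e1, e2, e3]; simp
  have hJ : IntegrableOn (fun p => (1 / (1 - ν)) * pdT F p - ν / 2 * X2 a w ψ ν ε m p)
      (halfSpace n) := (hFi.const_mul (1 / (1 - ν))).sub (hXi.const_mul (ν / 2))
  have hfin := integral_mono_ae hWi (hJ.add hIi) hae
  have e1 : ∫ p in halfSpace n, ((1 / (1 - ν)) * pdT F p - ν / 2 * X2 a w ψ ν ε m p
        + (tsupport ψ).indicator (fun _ => K * ρ) p)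
      = (1 / (1 - ν)) * (∫ p in halfSpace n, pdT F p)
        - ν / 2 * (∫ p in halfSpace n, X2 a w ψ ν ε m p)
        + ∫ p in halfSpace n, (tsupport ψ).indicator (fun _ => K * ρ) p := by
    rw [integral_add hJ hIi, integral_sub (hFi.const_mul (1 / (1 - ν))) (hXi.const_mul (ν / 2)),
      integral_const_mul, integral_const_mul]
  have hfin2 := hW0.trans (hfin.trans_eq e1)
  rw [hF0] at hfin2
  linarith

/-- the power density -/
def Yw {n : ℕ} (w ψ : Pt n → ℝ) (q : ℝ) (m : ℕ) (p : Pt n) : ℝ := w p ^ q * ψ p ^ (m + 2)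

lemma Setup.Yw_int {n : ℕ} {a : Fin n → Fin n → Pt n → ℝ} {q : ℝ} {u v : Pt n → ℝ}
    (S : Setup a q u v) {ψ : Pt n → ℝ} (hψ : ContDiff ℝ 1 ψ)
    (hc : HasCompactSupport ψ) (hS : tsupport ψ ⊆ halfSpace n) (m : ℕ) :
    IntegrableOn (Yw (fun p => u p - v p) ψ q m) (halfSpace n) := by
  have h1 : LocInt (fun p => (u p - v p) ^ q) :=
    locInt_cont (S.wC1.continuousOn.rpow_const fun p _ => Or.inr (by linarith [S.hq1]))
  have hsub := tsupport_pow_sub ψ m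
  exact (h1.integrable_mul (φ := fun p => ψ p ^ (m + 2)) (hψ.continuous.pow _)
    (hc.of_isClosed_subset (isClosed_tsupport _) hsub) (hsub.trans hS)).integrableOn

lemma Setup.step2 {n : ℕ} {a : Fin n → Fin n → Pt n → ℝ} {q : ℝ} {u v : Pt n → ℝ}
    (S : Setup a q u v) (ν C1 : ℝ) (m : ℕ) (hν0 : 0 < ν) (hν2 : 1 + ν < q)
    (hC1 : 0 < C1) (hm0 : 0 < m) (hm2 : (m + 2 : ℝ) * (1 / q) ≤ m)
    (hm3 : (m + 2 : ℝ) * ((1 + ν) / q) ≤ m) :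
    ∃ K : ℝ, 0 ≤ K ∧ ∀ (l1 l2 μ ρ r z ε V : ℝ) (E : Set (Pt n)) (ψ : Pt n → ℝ),
      Cut a C1 r V E ψ → MeasurableSet E → 0 ≤ l1 → 0 ≤ l2 → 0 < μ →
      (∀ x b : ℝ, 0 ≤ x → 0 ≤ b → x ^ (1 / q) * b ≤ l1 * x + l2 * b ^ (1 / (1 - 1 / q))) →
      (∀ x b : ℝ, 0 ≤ x → 0 ≤ b →
        x ^ ((1 + ν) / q) * b ≤ l1 * x + l2 * b ^ (1 / (1 - (1 + ν) / q))) →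
      0 < ε → 0 ≤ r → 0 < z → 0 ≤ V →
      r ^ (1 / (1 - 1 / q)) = ρ → (z * r) ^ (1 / (1 - (1 + ν) / q)) = ρ →
      (2 : ℝ) ^ (1 - q) * ∫ p in halfSpace n, Yw (fun p => u p - v p) ψ q m p ≤
        μ * z⁻¹ * (∫ p in halfSpace n, X2 a (fun p => u p - v p) ψ ν ε m p)
        + K * (1 + 1 / μ) * (l1 * ((∫ p in halfSpace n,
            E.indicator (Yw (fun p => u p - v p) ψ q m) p) + ε ^ q * V) + l2 * (ρ * V)) := by
  obtain ⟨K, hK, hpt⟩ := pointwise2 q ν C1 m S.hq1 hν0 hν2 hC1 hm0 hm2 hm3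
  refine ⟨K, hK, ?_⟩
  intro l1 l2 μ ρ r z ε V E ψ hψ hE hl1 hl2 hμ hY2 hY3 hε hr hz hV hρ2 hρ3
  have hmS : MeasurableSet (halfSpace n) := (isOpen_halfSpace n).measurableSet
  have hρ0 : 0 ≤ ρ := by rw [← hρ2]; positivity
  set w : Pt n → ℝ := fun p => u p - v p with hw
  have hw0 : ∀ p ∈ halfSpace n, 0 ≤ w p := fun p hp => sub_nonneg.2 (S.huv p hp)
  have hts := tsupport_pow_sub ψ m
  -- test function
  set φ : Pt n → ℝ := fun p => ψ p ^ (m + 2) with hφ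
  have hφ1 : ContDiff ℝ 1 φ := hψ.smooth.pow _
  have hφt : tsupport φ ⊆ tsupport ψ := hts
  have hφc : HasCompactSupport φ := hψ.compact.of_isClosed_subset (isClosed_tsupport _) hφt
  have hφ0 : ∀ p, 0 ≤ φ p := fun p => pow_nonneg (hψ.nonneg p) _
  obtain ⟨hWi, hW0⟩ := weak_diff S.hq1 a S.ha_meas S.ha_locbdd u v S.hu S.hv S.hsup S.hsub
    hφ1 hφc (hφt.trans hψ.supp) hφ0
  -- time derivative
  set F : Pt n → ℝ := fun p => w p * ψ p ^ (m + 2) with hF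
  have hF1 : ContDiff ℝ 1 F := contDiff_mul_cutoff S.wC1 hφ1 (hts.trans hψ.supp)
  have hFt : tsupport F ⊆ tsupport ψ := (tsupport_mul_sub _ _).trans hts
  obtain ⟨hFi, hF0⟩ := integral_pdT hF1
    (hψ.compact.of_isClosed_subset (isClosed_tsupport _) hFt) (hFt.trans hψ.supp)
  set k : ℝ := K * (1 + 1 / μ) with hk
  have hk0 : 0 ≤ k := by positivity
  obtain ⟨hIi, hI⟩ := int_ind (κ := k * (l1 * ε ^ q + l2 * ρ)) hV (by positivity)
    hψ.compact hψ.vol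
  have hXi : IntegrableOn (X2 a w ψ ν ε m) (halfSpace n) :=
    S.X2_int hψ.smooth hψ.compact hψ.supp ν ε hε m
  have hYi : IntegrableOn (Yw w ψ q m) (halfSpace n) :=
    S.Yw_int hψ.smooth hψ.compact hψ.supp m
  have hZi : IntegrableOn (E.indicator (Yw w ψ q m)) (halfSpace n) := hYi.indicator hE
  -- pointwise bound
  have hae : ∀ᵐ p ∂(volume.restrict (halfSpace n)), Wint a q u v φ p ≤
      pdT F p - (2 : ℝ) ^ (1 - q) * Yw w ψ q m p + μ * z⁻¹ * X2 a w ψ ν ε m p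
        + k * l1 * E.indicator (Yw w ψ q m) p
        + (tsupport ψ).indicator (fun _ => k * (l1 * ε ^ q + l2 * ρ)) p := by
    filter_upwards [ae_restrict_mem hmS, S.hsymm, S.hpos, hψ.dX] with p hp hsy hpo hdX
    by_cases hpt' : p ∈ tsupport ψ
    · rw [Set.indicator_of_mem hpt']
      have hdw : DifferentiableAt ℝ w p := diffAt_of S.wC1 hp
      have hdψ : DifferentiableAt ℝ ψ p := hψ.smooth.differentiable one_ne_zero p
      have hχ : E.indicator (fun _ => (1 : ℝ)) p = 0 ∨ E.indicator (fun _ => (1 : ℝ)) p = 1 := by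
        by_cases h : p ∈ E <;> simp [h]
      have key := hpt l1 l2 μ ρ r z ε (w p) (ψ p) (pdT w p) (pdT ψ p)
        (Qf a p (fun i => pdX w i p) (fun i => pdX w i p))
        (Qf a p (fun i => pdX ψ i p) (fun i => pdX w i p))
        (Qf a p (fun i => pdX ψ i p) (fun i => pdX ψ i p))
        (oddPow q (u p) - oddPow q (v p)) (E.indicator (fun _ => (1 : ℝ)) p) hl1 hl2 hμ hY2 hY3
        hε hr hz (hw0 p hp) (hψ.nonneg p) (hψ.le_one p) hχ hρ2 hρ3
        (fun x y => Qf_cs a p hsy hpo _ _ x y) hdX (hψ.dT p)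
        (oddPow_sub S.hq1 (S.huv p hp))
      have eT : pdT F p = pdT w p * ψ p ^ (m + 2)
          + w p * ((m + 2) * ψ p ^ (m + 1) * pdT ψ p) := by
        have := fderiv_prod 1 0 m hdw hdψ (Or.inr le_rfl) (1, 0)
        simp only [add_zero, Real.rpow_one, sub_self, Real.rpow_zero] at this
        change pdT F p = _ at this
        rw [this]
        simp only [pdT]
        ring
      have eX : ∀ i, pdX φ i p = 0 * pdX w i p
          + ((m + 2) * ψ p ^ (m + 1)) * pdX ψ i p := fun i => by
        have := fderiv_prod 0 (1 + |w p|) m hdw hdψ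
          (Or.inl (ne_of_gt (by linarith [neg_abs_le (w p)]))) (0, EuclideanSpace.single i 1)
        simp only [Real.rpow_zero, one_mul, mul_one, zero_mul] at this
        rw [zero_mul]
        exact this
      have eQ : Wint a q u v φ p = pdT w p * ψ p ^ (m + 2)
          + (m + 2) * ψ p ^ (m + 1)
              * Qf a p (fun i => pdX ψ i p) (fun i => pdX w i p)
          - (oddPow q (u p) - oddPow q (v p)) * ψ p ^ (m + 2) := by
        unfold Wint
        simp only [eX]
        rw [Qf_lin, zero_mul, zero_add]
      rw [eQ, eT]
      refine key.trans (le_of_eq ?_)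
      have eI : E.indicator (Yw w ψ q m) p
          = w p ^ q * ψ p ^ (m + 2) * E.indicator (fun _ => (1 : ℝ)) p := by
        by_cases h : p ∈ E <;> simp [h, Yw]
      rw [eI]
      simp only [X2, Yw]
      ring
    · rw [Set.indicator_of_notMem hpt']
      have h1 : ψ p = 0 := image_eq_zero_of_notMem_tsupport hpt'
      have h2 : fderiv ℝ φ p = 0 := fderiv_zero_off fun h => hpt' (hφt h)
      have h3 : fderiv ℝ F p = 0 := fderiv_zero_off fun h => hpt' (hFt h)
      have h4 : φ p = 0 := image_eq_zero_of_notMem_tsupport fun h => hpt' (hφt h)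
      have e1 : X2 a w ψ ν ε m p = 0 := by simp [X2, h1]
      have e2 : Wint a q u v φ p = 0 := by simp [Wint, h4, pdX, h2, Qf]
      have e3 : pdT F p = 0 := by simp [pdT, h3]
      have e4 : Yw w ψ q m p = 0 := by simp [Yw, h1]
      have e5 : E.indicator (Yw w ψ q m) p = 0 := by
        by_cases h : p ∈ E <;> simp [h, e4]
      rw [e1, e2, e3, e5, e4]; simp
  have j1 : IntegrableOn (fun p => pdT F p - (2 : ℝ) ^ (1 - q) * Yw w ψ q m p)
    (halfSpace n) := hFi.sub (hYi.const_mul _)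
  have j2 : IntegrableOn (fun p => pdT F p - (2 : ℝ) ^ (1 - q) * Yw w ψ q m p
    + μ * z⁻¹ * X2 a w ψ ν ε m p) (halfSpace n) := j1.add (hXi.const_mul _)
  have j3 : IntegrableOn (fun p => pdT F p - (2 : ℝ) ^ (1 - q) * Yw w ψ q m p
    + μ * z⁻¹ * X2 a w ψ ν ε m p + k * l1 * E.indicator (Yw w ψ q m) p) (halfSpace n) :=
    j2.add (hZi.const_mul _)
  have hfin := integral_mono_ae hWi (j3.add hIi) hae
  have e1 : ∫ p in halfSpace n, (pdT F p - (2 : ℝ) ^ (1 - q) * Yw w ψ q m p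
        + μ * z⁻¹ * X2 a w ψ ν ε m p
        + k * l1 * E.indicator (Yw w ψ q m) p
        + (tsupport ψ).indicator (fun _ => k * (l1 * ε ^ q + l2 * ρ)) p)
      = (∫ p in halfSpace n, pdT F p) - (2 : ℝ) ^ (1 - q) * (∫ p in halfSpace n, Yw w ψ q m p)
        + μ * z⁻¹ * (∫ p in halfSpace n, X2 a w ψ ν ε m p)
        + k * l1 * (∫ p in halfSpace n, E.indicator (Yw w ψ q m) p)
        + ∫ p in halfSpace n, (tsupport ψ).indicator (fun _ => k * (l1 * ε ^ q + l2 * ρ)) p := by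
    rw [integral_add j3 hIi, integral_add j2 (hZi.const_mul _), integral_add j1 (hXi.const_mul _),
      integral_sub hFi (hYi.const_mul _),
      integral_const_mul, integral_const_mul, integral_const_mul]
  have hfin2 := hW0.trans (hfin.trans_eq e1)
  rw [hF0] at hfin2
  nlinarith [hfin2, hI]

/-! ### Conclusion -/

lemma young_pair (q ν : ℝ) (hq : 1 < q) (hν0 : 0 < ν) (hν2 : 1 + ν < q) (κ : ℝ) (hκ : 0 < κ) :
    (∃ M : ℝ, 0 ≤ M ∧
      (∀ x b : ℝ, 0 ≤ x → 0 ≤ b → x ^ (1 / q) * b ≤ κ * x + M * b ^ (1 / (1 - 1 / q))) ∧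
      (∀ x b : ℝ, 0 ≤ x → 0 ≤ b →
        x ^ ((1 + ν) / q) * b ≤ κ * x + M * b ^ (1 / (1 - (1 + ν) / q)))) ∧
    (∃ M : ℝ, 0 ≤ M ∧
      (∀ x b : ℝ, 0 ≤ x → 0 ≤ b → x ^ (1 / q) * b ≤ M * x + κ * b ^ (1 / (1 - 1 / q))) ∧
      (∀ x b : ℝ, 0 ≤ x → 0 ≤ b →
        x ^ ((1 + ν) / q) * b ≤ M * x + κ * b ^ (1 / (1 - (1 + ν) / q)))) := by
  have hq0 : 0 < q := by linarith
  have a1 : 0 < 1 / q := by positivity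
  have a2 : 1 / q < 1 := by rw [div_lt_one hq0]; exact hq
  have b1 : 0 < (1 + ν) / q := by positivity
  have b2 : (1 + ν) / q < 1 := by rw [div_lt_one hq0]; exact hν2
  obtain ⟨M1, h1, y1⟩ := young_first (1 / q) a1 a2 κ hκ
  obtain ⟨M2, h2, y2⟩ := young_first ((1 + ν) / q) b1 b2 κ hκ
  obtain ⟨M3, h3, y3⟩ := young_second (1 / q) a1 a2 κ hκ
  obtain ⟨M4, h4, y4⟩ := young_second ((1 + ν) / q) b1 b2 κ hκ
  refine ⟨⟨M1 + M2, by positivity, ?_, ?_⟩, ⟨M3 + M4, by positivity, ?_, ?_⟩⟩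
  · intro x b hx hb
    have := y1 x b hx hb
    have : 0 ≤ M2 * b ^ (1 / (1 - 1 / q)) := by positivity
    linarith
  · intro x b hx hb
    have := y2 x b hx hb
    have : 0 ≤ M1 * b ^ (1 / (1 - (1 + ν) / q)) := by positivity
    linarith
  · intro x b hx hb
    have := y3 x b hx hb
    have : 0 ≤ M4 * x := by positivity
    linarith
  · intro x b hx hb
    have := y4 x b hx hb
    have : 0 ≤ M3 * x := by positivity
    linarith

/-- The main estimate, uniform in `R`. -/
lemma Setup.estimate {n : ℕ} {a : Fin n → Fin n → Pt n → ℝ} {q : ℝ} {u v : Pt n → ℝ}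
    (S : Setup a q u v) (hn : 1 ≤ n) (α : ℝ) (hα : α = n * (q - 1))
    (ν C1 C2 : ℝ) (m : ℕ) (hν0 : 0 < ν) (hν1 : ν < 1) (hν2 : 1 + ν < q)
    (hC1 : 0 < C1) (hC2 : 0 < C2) (hm0 : 0 < m)
    (hm1 : (m + 2 : ℝ) * ((1 - ν) / (q - ν)) ≤ m) (hm2 : (m + 2 : ℝ) * (1 / q) ≤ m)
    (hm3 : (m + 2 : ℝ) * ((1 + ν) / q) ≤ m) :
    ∃ B : ℝ, 0 ≤ B ∧ ∃ K : ℝ, 0 ≤ K ∧ ∀ (R l1 l2 μ : ℝ) (ψ : Pt n → ℝ), 1 < R →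
      Cut a C1 (R ^ (-α)) (C2 * R ^ (n + α)) (ER n α R) ψ → 0 ≤ l1 → 0 ≤ l2 → 0 < μ →
      (∀ x b : ℝ, 0 ≤ x → 0 ≤ b → x ^ (1 / q) * b ≤ l1 * x + l2 * b ^ (1 / (1 - 1 / q))) →
      (∀ x b : ℝ, 0 ≤ x → 0 ≤ b →
        x ^ ((1 + ν) / q) * b ≤ l1 * x + l2 * b ^ (1 / (1 - (1 + ν) / q))) →
      (2 : ℝ) ^ (1 - q) * ∫ p in halfSpace n, Yw (fun p => u p - v p) ψ q m p ≤
        μ * B + K * (1 + 1 / μ) * (l1 * ((∫ p in halfSpace n,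
            (ER n α R).indicator (Yw (fun p => u p - v p) ψ q m) p) + C2 * R ^ (-q)) + l2 * C2) := by
  obtain ⟨K1, hK1, h1⟩ := S.step1 ν C1 m hν0 hν1 hC1 hm0 hm1
  obtain ⟨K2, hK2, h2⟩ := S.step2 ν C1 m hν0 hν2 hC1 hm0 hm2 hm3
  refine ⟨2 / ν * (K1 * C2), by positivity, K2, hK2, ?_⟩
  intro R l1 l2 μ ψ hR hψ hl1 hl2 hμ hY2 hY3
  have hR0 : 0 < R := by linarith
  have hq1 := S.hq1
  have hn0 : (0 : ℝ) < n := by exact_mod_cast hn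
  have e1 : (R ^ (-α)) ^ (1 / (1 - (1 - ν) / (q - ν))) = R ^ (-(n * (q - ν))) := by
    rw [← Real.rpow_mul hR0.le]
    congr 1
    have : q - ν ≠ 0 := by linarith
    have h4 : q - 1 ≠ 0 := by linarith
    have h3 : 1 - (1 - ν) / (q - ν) = (q - 1) / (q - ν) := by field_simp; ring
    rw [h3, hα]; field_simp
  have e2 : (R ^ (-α)) ^ (1 / (1 - 1 / q)) = R ^ (-(n * q)) := by
    rw [← Real.rpow_mul hR0.le]
    congr 1
    have h4 : q - 1 ≠ 0 := by linarith
    have h3 : 1 - 1 / q = (q - 1) / q := by field_simp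
    rw [h3, hα]; field_simp
  have e3 : (R ^ (n * ν) * R ^ (-α)) ^ (1 / (1 - (1 + ν) / q)) = R ^ (-(n * q)) := by
    rw [← Real.rpow_add hR0, ← Real.rpow_mul hR0.le]
    congr 1
    have h4 : q - 1 - ν ≠ 0 := by linarith
    have h3 : 1 - (1 + ν) / q = (q - 1 - ν) / q := by field_simp; ring
    rw [h3, hα]; field_simp; ring
  have hε : 0 < R ^ (-(n + 1 : ℝ)) := by positivity
  have hV : 0 ≤ C2 * R ^ (n + α) := by positivity
  have hεν : (R ^ (-(n + 1 : ℝ))) ^ (q - ν) ≤ R ^ (-(n * (q - ν))) := by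
    rw [← Real.rpow_mul hR0.le]
    apply Real.rpow_le_rpow_of_exponent_le hR.le
    nlinarith
  have s1 := h1 (R ^ (-(n + 1 : ℝ))) (R ^ (-(n * (q - ν)))) (R ^ (-α)) (C2 * R ^ (n + α))
    (ER n α R) ψ hψ hε (by positivity) hV e1.symm hεν
  have s2 := h2 l1 l2 μ (R ^ (-(n * q))) (R ^ (-α)) (R ^ (n * ν)) (R ^ (-(n + 1 : ℝ)))
    (C2 * R ^ (n + α)) (ER n α R) ψ hψ (measurableSet_ER n α R) hl1 hl2 hμ hY2 hY3 hε
    (by positivity) (by positivity) hV e2 e3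
  set X : ℝ := ∫ p in halfSpace n, X2 a (fun p => u p - v p) ψ ν (R ^ (-(n + 1 : ℝ))) m p
  have f1 : (R ^ (-(n + 1 : ℝ))) ^ q * (C2 * R ^ (n + α)) = C2 * R ^ (-q) := by
    rw [← Real.rpow_mul hR0.le, mul_left_comm, ← Real.rpow_add hR0]
    congr 2
    rw [hα]; ring
  have f2 : R ^ (-(n * q)) * (C2 * R ^ (n + α)) = C2 := by
    rw [mul_left_comm, ← Real.rpow_add hR0]
    have : -(n * q) + (n + α) = 0 := by rw [hα]; ring
    rw [this, Real.rpow_zero, mul_one]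
  have f3 : (R ^ (n * ν))⁻¹ * X ≤ 2 / ν * (K1 * C2) := by
    have g1 : R ^ (-(n * (q - ν))) * (C2 * R ^ (n + α)) = C2 * R ^ (n * ν) := by
      rw [mul_left_comm, ← Real.rpow_add hR0]
      congr 2
      rw [hα]; ring
    have hz : 0 < R ^ (n * ν) := by positivity
    rw [mul_assoc, g1] at s1
    rw [inv_mul_le_iff₀ hz]
    have : X = 2 / ν * (ν / 2 * X) := by field_simp
    rw [this]
    calc 2 / ν * (ν / 2 * X) ≤ 2 / ν * (K1 * (C2 * R ^ (n * ν))) := by gcongr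
      _ = _ := by ring
  rw [f1, f2, mul_assoc μ] at s2
  have := mul_le_mul_of_nonneg_left f3 hμ.le
  linarith

lemma Setup.conclusion {n : ℕ} {a : Fin n → Fin n → Pt n → ℝ} {q : ℝ} {u v : Pt n → ℝ}
    (S : Setup a q u v) (hn : 1 ≤ n) (α c : ℝ) (hα : α = n * (q - 1)) (hc : 0 < c)
    (A : Pt n → ℝ) (hA_nonneg : ∀ p, 0 ≤ A p)
    (hform : ∀ᵐ p ∂(volume.restrict (halfSpace n)), ∀ ξ : Xn n,
      0 ≤ ∑ i, ∑ j, a i j p * ξ i * ξ j ∧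
      ∑ i, ∑ j, a i j p * ξ i * ξ j ≤ A p * ‖ξ‖ ^ 2)
    (hcond8 : Cond8 A α c) : ∀ p ∈ halfSpace n, u p = v p := by
  have hq1 := S.hq1
  have hq0 : 0 < q := by linarith
  have hn0 : (0 : ℝ) < n := by exact_mod_cast hn
  have hα0 : 0 < α := by rw [hα]; exact mul_pos hn0 (by linarith)
  have hmS : MeasurableSet (halfSpace n) := (isOpen_halfSpace n).measurableSet
  set ν : ℝ := min 1 (q - 1) / 2 with hν
  have hmin : 0 < min 1 (q - 1) := lt_min one_pos (by linarith)
  have hν0 : 0 < ν := by positivity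
  have hν1 : ν < 1 := by have := min_le_left 1 (q - 1); linarith
  have hν2 : 1 + ν < q := by have := min_le_right 1 (q - 1); linarith
  obtain ⟨m, hm0, hm1, hm2, hm3⟩ := exists_m ((1 - ν) / (q - ν)) (1 / q) ((1 + ν) / q)
    (by rw [div_lt_one (by linarith)]; linarith) (by rw [div_lt_one hq0]; exact hq1)
    (by rw [div_lt_one hq0]; exact hν2)
  obtain ⟨C1, hC1, C2, hC2, hcut⟩ := exists_cutoff n α c hα0 hc a A hA_nonneg hform hcond8
  obtain ⟨B, hB, K, hK, hest⟩ := S.estimate hn α hα ν C1 C2 m hν0 hν1 hν2 hC1 hC2 hm0 hm1 hm2 hm3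
  set Rk : ℕ → ℝ := fun k => (k : ℝ) + 2 with hRk
  have hRk1 : ∀ k, 1 < Rk k := fun k => by
    have : (0 : ℝ) ≤ k := by positivity
    simp only [hRk]; linarith
  have hRkt : Filter.Tendsto Rk Filter.atTop Filter.atTop :=
    Filter.tendsto_atTop_add_const_right _ _ tendsto_natCast_atTop_atTop
  choose ψ hψs hψc hψS hψ0 hψ1 hψV hψT hψX hψone using fun k => hcut (Rk k) (hRk1 k)
  have hC : ∀ k, Cut a C1 (Rk k ^ (-α)) (C2 * Rk k ^ (n + α)) (ER n α (Rk k)) (ψ k) := fun k =>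
    ⟨(hψs k).of_le (by norm_cast), hψc k, hψS k, hψ0 k, hψ1 k, hψV k, hψT k, hψX k⟩
  set w : Pt n → ℝ := fun p => u p - v p with hw
  have hw0 : ∀ p ∈ halfSpace n, 0 ≤ w p := fun p hp => sub_nonneg.2 (S.huv p hp)
  set c0 : ℝ := (2 : ℝ) ^ (1 - q) with hc0
  have hc0p : 0 < c0 := by positivity
  have hYi : ∀ k, IntegrableOn (Yw w (ψ k) q m) (halfSpace n) := fun k =>
    S.Yw_int (hC k).smooth (hC k).compact (hC k).supp m
  have hY0 : ∀ k, ∀ p ∈ halfSpace n, 0 ≤ Yw w (ψ k) q m p := fun k p hp =>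
    mul_nonneg (Real.rpow_nonneg (hw0 p hp) _) (pow_nonneg (hψ0 k p) _)
  have hYle : ∀ k, ∀ p ∈ halfSpace n, Yw w (ψ k) q m p ≤ w p ^ q := fun k p hp =>
    mul_le_of_le_one_right (Real.rpow_nonneg (hw0 p hp) _) (pow_le_one₀ (hψ0 k p) (hψ1 k p))
  -- eventually in the good region
  have hev : ∀ p ∈ halfSpace n, ∀ᶠ k in Filter.atTop,
      2 / Rk k ≤ p.1 ∧ p.1 ≤ Rk k ^ α ∧ ‖p.2‖ ≤ Rk k := by
    intro p hp
    have hp0 : 0 < p.1 := hp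
    filter_upwards [hRkt.eventually_ge_atTop (2 / p.1), hRkt.eventually_ge_atTop ‖p.2‖,
      ((tendsto_rpow_atTop hα0).comp hRkt).eventually_ge_atTop p.1] with k h1 h2 h3
    refine ⟨?_, h3, h2⟩
    have : 0 < Rk k := by linarith [hRk1 k]
    rw [div_le_iff₀ this]
    rw [div_le_iff₀ hp0] at h1
    linarith
  have hlimY : ∀ p ∈ halfSpace n, Filter.Tendsto (fun k => Yw w (ψ k) q m p) Filter.atTop
      (nhds (w p ^ q)) := by
    intro p hp
    apply tendsto_const_nhds.congr'
    filter_upwards [hev p hp] with k hk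
    simp [Yw, hψone k p hk.1 hk.2.1 hk.2.2]
  have hlimJ : ∀ p ∈ halfSpace n, Filter.Tendsto
      (fun k => (ER n α (Rk k)).indicator (Yw w (ψ k) q m) p) Filter.atTop (nhds 0) := by
    intro p hp
    apply tendsto_const_nhds.congr'
    filter_upwards [hev p hp] with k hk
    rw [Set.indicator_of_notMem]
    rintro (h | h)
    · linarith [hk.2.1]
    · linarith [hk.2.2]
  have hwc : ContinuousOn (fun p => w p ^ q) (halfSpace n) :=
    S.wC1.continuousOn.rpow_const fun p _ => Or.inr hq0.le
  have hwm : AEStronglyMeasurable (fun p => w p ^ q) (volume.restrict (halfSpace n)) :=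
    hwc.aestronglyMeasurable hmS
  -- Step A : boundedness
  obtain ⟨Mb, hMb⟩ : ∃ Mb : ℝ, ∀ k, ∫ p in halfSpace n, Yw w (ψ k) q m p ≤ Mb := by
    set l1 : ℝ := c0 / (4 * (K + 1)) with hl1
    have hl1p : 0 < l1 := by positivity
    obtain ⟨M, hM, y2, y3⟩ := (young_pair q ν hq1 hν0 hν2 l1 hl1p).1
    refine ⟨2 / c0 * (B + K * 2 * (l1 * C2 + M * C2)), fun k => ?_⟩
    have h := hest (Rk k) l1 M 1 (ψ k) (hRk1 k) (hC k) hl1p.le hM one_pos y2 y3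
    set I : ℝ := ∫ p in halfSpace n, Yw w (ψ k) q m p with hI
    set J : ℝ := ∫ p in halfSpace n, (ER n α (Rk k)).indicator (Yw w (ψ k) q m) p with hJ
    have hI0 : 0 ≤ I := setIntegral_nonneg hmS (hY0 k)
    have hJI : J ≤ I := by
      apply setIntegral_mono_on ((hYi k).indicator (measurableSet_ER n α _)) (hYi k) hmS
      intro p hp
      by_cases h : p ∈ ER n α (Rk k)
      · rw [Set.indicator_of_mem h]
      · rw [Set.indicator_of_notMem h]; exact hY0 k p hp
    have hRq : Rk k ^ (-q) ≤ 1 := Real.rpow_le_one_of_one_le_of_nonpos (hRk1 k).le (by linarith)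
    have hb : K * 2 * (l1 * (J + C2 * Rk k ^ (-q)) + M * C2)
        ≤ K * 2 * (l1 * (I + C2 * 1) + M * C2) := by gcongr
    have hb2 : K * 2 * l1 ≤ c0 / 2 := by
      rw [hl1]
      have h1 : K * 2 * (c0 / (4 * (K + 1))) = (c0 / 2) * (K / (K + 1)) := by field_simp; ring
      rw [h1]
      exact mul_le_of_le_one_right (by positivity) (by rw [div_le_one (by positivity)]; linarith)
    have hb3 := mul_le_mul_of_nonneg_right hb2 hI0
    have h5 : c0 / 2 * I ≤ B + K * 2 * (l1 * C2 + M * C2) := by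
      norm_num at h
      change c0 * I ≤ B + K * 2 * (l1 * (J + C2 * Rk k ^ (-q)) + M * C2) at h
      nlinarith
    have h6 : I = 2 / c0 * (c0 / 2 * I) := by field_simp
    rw [h6]
    gcongr
  -- integrability of w ^ q
  have hwi : IntegrableOn (fun p => w p ^ q) (halfSpace n) := by
    refine ⟨hwm, ?_⟩
    rw [hasFiniteIntegral_iff_ofReal (by
      filter_upwards [ae_restrict_mem hmS] with p hp using Real.rpow_nonneg (hw0 p hp) _)]
    have hF : ∫⁻ p in halfSpace n, ENNReal.ofReal (w p ^ q) ≤ ENNReal.ofReal Mb := by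
      calc ∫⁻ p in halfSpace n, ENNReal.ofReal (w p ^ q)
          = ∫⁻ p in halfSpace n, Filter.liminf
              (fun k => ENNReal.ofReal (Yw w (ψ k) q m p)) Filter.atTop := by
            apply setLIntegral_congr_fun hmS
            intro p hp
            exact ((ENNReal.tendsto_ofReal (hlimY p hp)).liminf_eq).symm
        _ ≤ Filter.liminf (fun k => ∫⁻ p in halfSpace n, ENNReal.ofReal (Yw w (ψ k) q m p))
              Filter.atTop :=
            lintegral_liminf_le' fun k => (hYi k).aestronglyMeasurable.aemeasurable.ennreal_ofReal
        _ ≤ ENNReal.ofReal Mb := by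
            apply Filter.liminf_le_of_le
            · isBoundedDefault
            · intro b hb
              obtain ⟨k, hk⟩ := hb.exists
              refine hk.trans ?_
              rw [← ofReal_integral_eq_lintegral_ofReal (hYi k) (by
                filter_upwards [ae_restrict_mem hmS] with p hp using hY0 k p hp)]
              exact ENNReal.ofReal_le_ofReal (hMb k)
    exact hF.trans_lt ENNReal.ofReal_lt_top
  -- limits of the integrals
  have tI : Filter.Tendsto (fun k => ∫ p in halfSpace n, Yw w (ψ k) q m p) Filter.atTop
      (nhds (∫ p in halfSpace n, w p ^ q)) := by
    apply tendsto_integral_of_dominated_convergence (fun p => w p ^ q)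
      (fun k => (hYi k).aestronglyMeasurable) hwi
    · intro k
      filter_upwards [ae_restrict_mem hmS] with p hp
      rw [Real.norm_eq_abs, abs_of_nonneg (hY0 k p hp)]
      exact hYle k p hp
    · filter_upwards [ae_restrict_mem hmS] with p hp using hlimY p hp
  have tJ : Filter.Tendsto (fun k => ∫ p in halfSpace n,
      (ER n α (Rk k)).indicator (Yw w (ψ k) q m) p) Filter.atTop (nhds 0) := by
    have : (0 : ℝ) = ∫ p in halfSpace n, (0 : ℝ) := by simp
    rw [this]
    apply tendsto_integral_of_dominated_convergence (fun p => w p ^ q)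
      (fun k => ((hYi k).indicator (measurableSet_ER n α _)).aestronglyMeasurable) hwi
    · intro k
      filter_upwards [ae_restrict_mem hmS] with p hp
      by_cases h : p ∈ ER n α (Rk k)
      · rw [Set.indicator_of_mem h, Real.norm_eq_abs, abs_of_nonneg (hY0 k p hp)]
        exact hYle k p hp
      · rw [Set.indicator_of_notMem h, norm_zero]
        exact Real.rpow_nonneg (hw0 p hp) _
    · filter_upwards [ae_restrict_mem hmS] with p hp using hlimJ p hp
  have tR : Filter.Tendsto (fun k => C2 * Rk k ^ (-q)) Filter.atTop (nhds 0) := by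
    have := ((tendsto_rpow_neg_atTop hq0).comp hRkt).const_mul C2
    rw [mul_zero] at this
    exact this
  -- Step B
  set I0 : ℝ := ∫ p in halfSpace n, w p ^ q with hI0
  have hB2 : ∀ μ l2 : ℝ, 0 < μ → 0 < l2 → c0 * I0 ≤ μ * B + K * (1 + 1 / μ) * (l2 * C2) := by
    intro μ l2 hμ hl2
    obtain ⟨M, hM, y2, y3⟩ := (young_pair q ν hq1 hν0 hν2 l2 hl2).2
    have h : ∀ k, _ := fun k => hest (Rk k) M l2 μ (ψ k) (hRk1 k) (hC k) hM hl2.le hμ y2 y3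
    have hr := ((((tJ.add tR).const_mul M).add_const (l2 * C2)).const_mul
      (K * (1 + 1 / μ))).const_add (μ * B)
    have := le_of_tendsto_of_tendsto' (tI.const_mul c0) hr h
    simpa using this
  have hfinal : I0 ≤ 0 := by
    by_contra hcon
    push Not at hcon
    have hp : 0 < c0 * I0 := by positivity
    set μ : ℝ := c0 * I0 / (4 * (B + 1)) with hμ
    have hμp : 0 < μ := by positivity
    set L : ℝ := K * (1 + 1 / μ) * C2 with hL
    have hL0 : 0 ≤ L := by positivity
    have := hB2 μ (c0 * I0 / (4 * (L + 1))) hμp (by positivity)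
    have h1 : μ * B ≤ c0 * I0 / 4 := by
      have : μ * B = c0 * I0 / 4 * (B / (B + 1)) := by rw [hμ]; field_simp
      rw [this]
      exact mul_le_of_le_one_right (by positivity) (by rw [div_le_one (by positivity)]; linarith)
    have h2 : K * (1 + 1 / μ) * (c0 * I0 / (4 * (L + 1)) * C2) ≤ c0 * I0 / 4 := by
      have : K * (1 + 1 / μ) * (c0 * I0 / (4 * (L + 1)) * C2) = c0 * I0 / 4 * (L / (L + 1)) := by
        have e : K * (1 + 1 / μ) * (c0 * I0 / (4 * (L + 1)) * C2)
          = (K * (1 + 1 / μ) * C2) * (c0 * I0 / (4 * (L + 1))) := by ring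
        rw [e, ← hL]; field_simp
      rw [this]
      exact mul_le_of_le_one_right (by positivity) (by rw [div_le_one (by positivity)]; linarith)
    linarith
  have hnn : 0 ≤ᵐ[volume.restrict (halfSpace n)] fun p => w p ^ q := by
    filter_upwards [ae_restrict_mem hmS] with p hp using Real.rpow_nonneg (hw0 p hp) _
  have hz : I0 = 0 := le_antisymm hfinal (integral_nonneg_of_ae hnn)
  have hae := (integral_eq_zero_iff_of_nonneg_ae hnn hwi).1 hz
  have heq := Measure.eqOn_open_of_ae_eq hae (isOpen_halfSpace n) hwc continuousOn_const
  intro p hp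
  have h1 : w p ^ q = 0 := heq hp
  have h2 : w p = 0 := (Real.rpow_eq_zero (hw0 p hp) hq0.ne').1 h1
  have h3 : u p - v p = 0 := h2
  linarith

/-- the Liouville comparison principle for a super-solution and a
sub-solution (Theorem 2). -/
theorem liouville_comparison_super_sub
    (n : ℕ) (hn : 1 ≤ n) (α c q : ℝ) (hα : 0 < α) (hc : 0 < c)
    (hq1 : 1 < q) (hq2 : q ≤ 1 + α / n)
    (a : Fin n → Fin n → Pt n → ℝ) (A : Pt n → ℝ)
    (ha_meas : ∀ i j, Measurable (a i j))
    (ha_locbdd : ∀ i j, ∀ K : Set (Pt n), IsCompact K → K ⊆ halfSpace n →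
      ∃ M, ∀ p ∈ K, |a i j p| ≤ M)
    (ha_symm : ∀ i j, ∀ᵐ p ∂(volume.restrict (halfSpace n)), a i j p = a j i p)
    (hA_meas : Measurable A)
    (hA_nonneg : ∀ p, 0 ≤ A p)
    (hA_locbdd : ∀ K : Set (Pt n), IsCompact K → K ⊆ halfSpace n →
      ∃ M, ∀ p ∈ K, A p ≤ M)
    (hform : ∀ᵐ p ∂(volume.restrict (halfSpace n)), ∀ ξ : Xn n,
      0 ≤ ∑ i, ∑ j, a i j p * ξ i * ξ j ∧
      ∑ i, ∑ j, a i j p * ξ i * ξ j ≤ A p * ‖ξ‖ ^ 2)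
    (hcond8 : Cond8 A α c)
    (u v : Pt n → ℝ)
    (hu : ContDiffOn ℝ 1 u (halfSpace n)) (hv : ContDiffOn ℝ 1 v (halfSpace n))
    (hu_int : LocallyIntegrableOn (fun p => |u p| ^ q) (halfSpace n) volume)
    (hv_int : LocallyIntegrableOn (fun p => |v p| ^ q) (halfSpace n) volume)
    (hsupersol : WeakSuperSol a q u)
    (hsubsol : WeakSubSol a q v)
    (huv : ∀ p ∈ halfSpace n, v p ≤ u p) :
    ∀ p ∈ halfSpace n, u p = v p := by
  have hn0 : (0 : ℝ) < n := by exact_mod_cast hn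
  have hle : n * (q - 1) ≤ α := by
    have h1 : q - 1 ≤ α / n := by linarith
    rw [le_div_iff₀ hn0] at h1
    linarith
  have S : Setup a q u v :=
    { hq1 := hq1
      ha_meas := ha_meas
      ha_locbdd := ha_locbdd
      hsymm := by
        rw [ae_all_iff]
        intro i
        rw [ae_all_iff]
        exact fun j => ha_symm i j
      hpos := by
        filter_upwards [hform] with p hp ξ using (hp ξ).1
      hu := hu
      hv := hv
      hsup := hsupersol
      hsub := hsubsol
      huv := huv }
  refine S.conclusion hn (n * (q - 1)) c rfl hc A hA_nonneg hform ?_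
  intro R hR
  filter_upwards [hcond8 R hR] with p hp
  refine hp.trans (mul_le_mul_of_nonneg_left ?_ hc.le)
  exact Real.rpow_le_rpow_of_exponent_le hR.le (by linarith)
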